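/- arXiv:2411.03158 — 3 statements merged into one kernel-verified Lean document; each statement's English description precedes it below -/
import Mathlib

section
/- Assume the form ⟨−,−⟩ is symmetric (and nondegenerate). Let H ⊆ V be a subspace with dim H = k and dim(H ∩ H^⊥) = k − r, and assume max{0, 2k − n} < r. Then the stabilizer S = {g ∈ End(V) : g is an isometry of V, det g = 1, and g(H) = H} has exactly two connected components as a subspace of End(V). -/
open Module

/-- Left orthogonal complement `H^⊥ = {v | ⟨v,w⟩ = 0 for all w ∈ H}` of a subspace with
respect to a bilinear form. -/
def bperp {V : Type*} [AddCommGroup V] [Module ℂ V]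
    (B : V →ₗ[ℂ] V →ₗ[ℂ] ℂ) (H : Submodule ℂ V) : Submodule ℂ V where
  carrier := {v | ∀ w ∈ H, B v w = 0}
  add_mem' := by
    intro a b ha hb w hw
    rw [map_add, LinearMap.add_apply, ha w hw, hb w hw, add_zero]
  zero_mem' := by
    intro w hw
    simp
  smul_mem' := by
    intro c a ha w hw
    rw [map_smul, LinearMap.smul_apply, ha w hw, smul_zero]

/-!
Let `R = H ∩ H^⊥`. On the stabilizer of `H` in the full orthogonal group, the determinant `det g`
and the determinant `d g` of the action on `H / R` are continuous characters with values `±1`.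

*Both values of `d` occur where `det = 1`.* The numerical hypotheses say that neither `H` nor
`H^⊥` is totally isotropic, so both contain anisotropic vectors `a ∈ H` and `c ∈ H^⊥`. The product
of the two reflections has determinant `1` and acts on `H` as the reflection in `a`, so that `d`
takes the value `-1` at it.

*The common fibres of `det` and `d` are path connected.* By translation it suffices to join `g` to
`1` when `det g = d g = 1`. If `-1` is not an eigenvalue of `g`, the Cayley family does this, its
parameter running over the complex line minus finitely many points. In general, let `σ` be the
involution that is `-1` on the generalized eigenspace of `g` for `-1` and `1` on the other ones; it
stabilizes `H`, and `σ g` is covered by the previous case. This leaves involutions. A nontrivial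
involution with trivial characters has in its `-1`-eigenspace a hyperbolic pair `u, v` with
`u ∈ R`, or with `u, v ∈ H`, or with `u, v ∈ H^⊥`. In each case the torus scaling `u` by `t` and
`v` by `t⁻¹` stabilizes `H` and joins `1` to the isometry that is `-1` on the plane of `u` and `v`;
multiplying by the latter shrinks the `-1`-eigenspace, and induction on its dimension concludes.
-/

section Isometries

variable {K V : Type*} [Field K] [AddCommGroup V] [Module K V]
  {B : LinearMap.BilinForm K V} {g : Module.End K V}

lemma ker_eq_bot_of_isOrthogonal (hB : B.Nondegenerate) (hg : B.IsOrthogonal g) :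
    LinearMap.ker g = ⊥ := by
  refine LinearMap.ker_eq_bot'.2 fun x hx => hB.1 x fun y => ?_
  rw [← hg x y, hx, map_zero, LinearMap.zero_apply]

lemma det_sq_eq_one_of_isOrthogonal [FiniteDimensional K V] (hB : B.Nondegenerate)
    (hg : B.IsOrthogonal g) : LinearMap.det g ^ 2 = 1 := by
  let b := finBasis K V
  have hcomp : B.comp g g = B := by
    ext x y
    exact hg x y
  have hdet : (LinearMap.BilinForm.toMatrix b B).det =
      LinearMap.det g ^ 2 * (LinearMap.BilinForm.toMatrix b B).det := by
    conv_lhs => rw [← hcomp, LinearMap.BilinForm.toMatrix_comp b b, Matrix.det_mul,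
      Matrix.det_mul, Matrix.det_transpose, LinearMap.det_toMatrix]
    ring
  exact mul_right_cancel₀ ((LinearMap.BilinForm.nondegenerate_iff_det_ne_zero b).1 hB)
    (hdet.symm.trans (one_mul _).symm)

end Isometries

section Stabilizer

variable {K V : Type*} [Field K] [AddCommGroup V] [Module K V]
  {B : LinearMap.BilinForm K V} {H : Submodule K V} {g : Module.End K V}

/-- The stabilizer of the subspace `H` among the linear isometries of `B`. It is defined as a
submonoid of `Module.End K V`; its elements are invertible as soon as `B` is nondegenerate and `V`
is finite-dimensional. -/
def isometryStabilizer (B : LinearMap.BilinForm K V) (H : Submodule K V) :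
    Submonoid (Module.End K V) where
  carrier := {g | B.IsOrthogonal g ∧ H.map g = H}
  one_mem' := ⟨fun _ _ => rfl, Submodule.map_id H⟩
  mul_mem' := fun {g h} hg hh =>
    ⟨fun x y => (hg.1 (h x) (h y)).trans (hh.1 x y), by
      rw [Module.End.mul_eq_comp, Submodule.map_comp, hh.2, hg.2]⟩

namespace isometryStabilizer

lemma apply_mem (hg : g ∈ isometryStabilizer B H) {x : V} (hx : x ∈ H) : g x ∈ H :=
  hg.2 ▸ Submodule.mem_map_of_mem hx

lemma mem_of_forall_apply_mem [FiniteDimensional K V] (hB : B.Nondegenerate)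
    (hg : B.IsOrthogonal g) (hH : ∀ x ∈ H, g x ∈ H) : g ∈ isometryStabilizer B H := by
  have hinj : Function.Injective g := LinearMap.ker_eq_bot.1 (ker_eq_bot_of_isOrthogonal hB hg)
  exact ⟨hg, Submodule.eq_of_le_of_finrank_eq (Submodule.map_le_iff_le_comap.2 hH)
    (H.equivMapOfInjective g hinj).finrank_eq.symm⟩

lemma isUnit [FiniteDimensional K V] (hB : B.Nondegenerate) (g : isometryStabilizer B H) :
    IsUnit g := by
  obtain ⟨g, hg⟩ := g
  obtain ⟨u, rfl⟩ := (LinearMap.isUnit_iff_ker_eq_bot g).2 (ker_eq_bot_of_isOrthogonal hB hg.1)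
  have hinv : B.IsOrthogonal (↑u⁻¹ : Module.End K V) := fun x y => by
    rw [← hg.1]
    simp only [← Module.End.mul_apply, Units.mul_inv, Module.End.one_apply]
  have hmap : H.map (↑u⁻¹ : Module.End K V) = H := by
    conv_lhs => rw [← hg.2, ← Submodule.map_comp, ← Module.End.mul_eq_comp, Units.inv_mul]
    exact Submodule.map_id H
  exact IsUnit.of_mul_eq_one ⟨↑u⁻¹, hinv, hmap⟩ (Subtype.ext u.mul_inv)

end isometryStabilizer

/-- The stabilizer of the subspace `H` among the isometries of `B` of determinant `1`. -/
noncomputable def specialIsometryStabilizer (B : LinearMap.BilinForm K V) (H : Submodule K V) :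
    Submonoid (Module.End K V) :=
  isometryStabilizer B H ⊓ MonoidHom.mker LinearMap.det

lemma mem_specialIsometryStabilizer_iff [FiniteDimensional K V] (hB : B.Nondegenerate) :
    g ∈ specialIsometryStabilizer B H ↔ Function.Bijective g ∧ (∀ x y, B (g x) (g y) = B x y) ∧
      LinearMap.det g = 1 ∧ H.map g = H :=
  ⟨fun ⟨hg, hdet⟩ => ⟨(Module.End.isUnit_iff g).1 ((isometryStabilizer.isUnit hB ⟨g, hg⟩).map
    (isometryStabilizer B H).subtype), hg.1, hdet, hg.2⟩, fun ⟨_, hgB, hdet, hH⟩ =>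
    ⟨⟨hgB, hH⟩, hdet⟩⟩

end Stabilizer

section QuotientCharacter

variable {K V : Type*} [Field K] [AddCommGroup V] [Module K V]
  {B : LinearMap.BilinForm K V} {H : Submodule K V}

/-- The nondegenerate quotient `H / (H ∩ H^⊥)` of a subspace `H`. -/
abbrev RadicalQuotient (B : LinearMap.BilinForm K V) (H : Submodule K V) : Type _ :=
  H ⧸ LinearMap.ker (B.restrict H)

/-- The action of the stabilizer of `H` on `H / (H ∩ H^⊥)`. -/
def quotientAction (B : LinearMap.BilinForm K V) (H : Submodule K V) :
    isometryStabilizer B H →* Module.End K (RadicalQuotient B H) where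
  toFun g := Submodule.mapQ _ _
    ((g : Module.End K V).restrict fun _ => isometryStabilizer.apply_mem g.2) <| by
      intro x hx
      ext ⟨y, hy⟩
      obtain ⟨z, hz, rfl⟩ := Submodule.mem_map.1 (g.2.2.ge hy)
      exact (g.2.1 x z).trans (LinearMap.congr_fun hx ⟨z, hz⟩)
  map_one' := Submodule.linearMap_qext _ rfl
  map_mul' _ _ := Submodule.linearMap_qext _ rfl

/-- The determinant of the action on `H / (H ∩ H^⊥)`; together with `LinearMap.det`, it separates
the connected components of the stabilizer of `H`. -/
noncomputable def quotientDet (B : LinearMap.BilinForm K V) (H : Submodule K V) :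
    isometryStabilizer B H →* K :=
  LinearMap.det.comp (quotientAction B H)

lemma exists_isOrthogonal_quotientAction (hs : B.IsSymm) :
    ∃ b : LinearMap.BilinForm K (RadicalQuotient B H), b.Nondegenerate ∧
      ∀ g, b.IsOrthogonal (quotientAction B H g) := by
  have hsH : (B.restrict H).IsSymm := hs.restrict H
  let b : LinearMap.BilinForm K (RadicalQuotient B H) :=
    hsH.isRefl.liftQ₂ _ _ le_rfl
  have hb : b.IsSymm := ⟨by
    rintro ⟨x⟩ ⟨y⟩
    exact hsH.eq x y⟩
  refine ⟨b, hb.isRefl.nondegenerate_iff_separatingLeft.2 ?_, ?_⟩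
  · rintro ⟨x⟩ hx
    exact (Submodule.Quotient.mk_eq_zero _).2 (LinearMap.ext fun y => hx (Submodule.Quotient.mk y))
  · rintro g ⟨x⟩ ⟨y⟩
    exact g.2.1 x y

lemma quotientDet_sq [FiniteDimensional K V] (hs : B.IsSymm) (g : isometryStabilizer B H) :
    quotientDet B H g ^ 2 = 1 := by
  obtain ⟨b, hb, hiso⟩ := exists_isOrthogonal_quotientAction (H := H) hs
  exact det_sq_eq_one_of_isOrthogonal hb (hiso g)

end QuotientCharacter

section Reflections

variable {K V : Type*} [Field K] [AddCommGroup V] [Module K V]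
  {B : LinearMap.BilinForm K V} {H : Submodule K V} {a : V}

lemma det_preReflection [FiniteDimensional K V] (a : V) (f : Dual K V) :
    LinearMap.det (preReflection a f) = 1 - f a := by
  have : preReflection a f = LinearMap.transvection (-f) a := by
    ext x
    simp [preReflection_apply, LinearMap.transvection.apply, sub_eq_add_neg]
  rw [this, LinearMap.transvection.det, LinearMap.neg_apply, sub_eq_add_neg]

/-- The reflection in the hyperplane orthogonal to `a`, for a symmetric form `B`. It is the
identity, by the convention `2 / 0 = 0`, when `a` is isotropic. -/
noncomputable def orthogonalReflection (B : LinearMap.BilinForm K V) (a : V) : Module.End K V :=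
  preReflection a ((2 / B a a) • B a)

lemma orthogonalReflection_apply (B : LinearMap.BilinForm K V) (a x : V) :
    orthogonalReflection B a x = x - (2 / B a a * B a x) • a := rfl

lemma isOrthogonal_orthogonalReflection (hs : B.IsSymm) (a : V) :
    B.IsOrthogonal (orthogonalReflection B a) := fun x y => by
  simp only [orthogonalReflection_apply, map_sub, map_smul, LinearMap.sub_apply,
    LinearMap.smul_apply, smul_eq_mul, hs.eq x a]
  rcases eq_or_ne (B a a) 0 with ha | ha
  · simp [ha]
  · field_simp
    ring

lemma det_orthogonalReflection [FiniteDimensional K V] (ha : B a a ≠ 0) :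
    LinearMap.det (orthogonalReflection B a) = -1 := by
  rw [orthogonalReflection, det_preReflection, LinearMap.smul_apply, smul_eq_mul,
    div_mul_cancel₀ _ ha]
  norm_num

lemma orthogonalReflection_mem_of_mem [FiniteDimensional K V] (hB : B.Nondegenerate)
    (hs : B.IsSymm) (ha : a ∈ H) : orthogonalReflection B a ∈ isometryStabilizer B H :=
  isometryStabilizer.mem_of_forall_apply_mem hB (isOrthogonal_orthogonalReflection hs a)
    fun _ hx => H.sub_mem hx (H.smul_mem _ ha)

lemma orthogonalReflection_apply_of_mem (hs : B.IsSymm) (ha : a ∈ B.orthogonal H) {x : V}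
    (hx : x ∈ H) : orthogonalReflection B a x = x := by
  have hax : B a x = 0 := (hs.eq a x).trans (LinearMap.BilinForm.mem_orthogonal_iff.1 ha x hx)
  rw [orthogonalReflection_apply, hax, mul_zero, zero_smul, sub_zero]

lemma orthogonalReflection_mem_of_mem_orthogonal [FiniteDimensional K V] (hB : B.Nondegenerate)
    (hs : B.IsSymm) (ha : a ∈ B.orthogonal H) :
    orthogonalReflection B a ∈ isometryStabilizer B H :=
  isometryStabilizer.mem_of_forall_apply_mem hB (isOrthogonal_orthogonalReflection hs a)
    fun _ hx => (orthogonalReflection_apply_of_mem hs ha hx).symm ▸ hx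

lemma quotientDet_eq_neg_one [FiniteDimensional K V] (hs : B.IsSymm) (ha : a ∈ H)
    (haa : B a a ≠ 0) {g : isometryStabilizer B H}
    (hg : ∀ x ∈ H, (g : Module.End K V) x = orthogonalReflection B a x) :
    quotientDet B H g = -1 := by
  let f : Dual K (RadicalQuotient B H) :=
    (LinearMap.ker (B.restrict H)).liftQ ((2 / B a a) • B.restrict H ⟨a, ha⟩) fun x hx => by
      have hax : B a x = 0 := (hs.eq a x).trans (LinearMap.congr_fun hx ⟨a, ha⟩)
      exact (congrArg (2 / B a a * ·) hax).trans (mul_zero _)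
  have hact : quotientAction B H g = preReflection (Submodule.Quotient.mk ⟨a, ha⟩) f :=
    Submodule.linearMap_qext _ <| LinearMap.ext fun x =>
      congrArg Submodule.Quotient.mk (Subtype.ext (hg x x.2))
  have hf : f (Submodule.Quotient.mk ⟨a, ha⟩) = 2 := div_mul_cancel₀ _ haa
  rw [quotientDet, MonoidHom.comp_apply, hact, det_preReflection, hf]
  norm_num

end Reflections

section Fitting

open Filter

variable {K V : Type*} [Field K] [AddCommGroup V] [Module K V]
  {B : LinearMap.BilinForm K V} {H p q : Submodule K V} {g : Module.End K V}

lemma eventually_le_ker_pow_sup_range_pow [FiniteDimensional K V] {f : Module.End K V}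
    (hf : ∀ x ∈ H, f x ∈ H) :
    ∀ᶠ m in atTop, H ≤ H ⊓ LinearMap.ker (f ^ m) ⊔ H ⊓ LinearMap.range (f ^ m) := by
  filter_upwards [(f.restrict hf).eventually_isCompl_ker_pow_range_pow] with m hm x hx
  obtain ⟨y, hy, _, ⟨w, rfl⟩, hyz⟩ := Submodule.mem_sup.1
    (hm.sup_eq_top.ge (Submodule.mem_top (x := (⟨x, hx⟩ : H))))
  rw [LinearMap.mem_ker, Module.End.pow_restrict] at hy
  rw [Module.End.pow_restrict] at hyz
  exact Submodule.mem_sup.2 ⟨y, ⟨y.2, congrArg Subtype.val hy⟩, (f ^ m) w,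
    ⟨Module.End.pow_apply_mem_of_forall_mem _ hf w w.2, w, rfl⟩, congrArg Subtype.val hyz⟩

lemma apply_pow_add_one_pow_of_isOrthogonal (hg : B.IsOrthogonal g) (m : ℕ) (x y : V) :
    B ((g ^ m) x) (((g + 1) ^ m) y) = B (((g + 1) ^ m) x) y := by
  have hone (x y : V) : B (g x) ((g + 1) y) = B ((g + 1) x) y := by
    simp only [LinearMap.add_apply, Module.End.one_apply, map_add, hg x y, add_comm]
  induction m generalizing x with
  | zero => rfl
  | succ m ih =>
    have hcomm : (g + 1) ((g ^ m) x) = (g ^ m) ((g + 1) x) :=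
      LinearMap.congr_fun (((Commute.refl g).add_left (Commute.one_left g)).pow_right m) x
    rw [pow_succ' g, pow_succ' (g + 1), Module.End.mul_apply, Module.End.mul_apply, hone, hcomm, ih,
      ← Module.End.mul_apply, ← pow_succ, pow_succ']

lemma ker_add_one_pow_le_orthogonal_range [FiniteDimensional K V] (hB : B.Nondegenerate)
    (hs : B.IsSymm) (hg : B.IsOrthogonal g) (m : ℕ) :
    LinearMap.ker ((g + 1) ^ m) ≤ B.orthogonal (LinearMap.range ((g + 1) ^ m)) := by
  have hunit : IsUnit (g ^ m) :=
    ((LinearMap.isUnit_iff_ker_eq_bot g).2 (ker_eq_bot_of_isOrthogonal hB hg)).pow m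
  have hbij : Function.Bijective (g ^ m) := (Module.End.isUnit_iff _).1 hunit
  have hcomm : Commute (g ^ m) ((g + 1) ^ m) :=
    ((Commute.refl g).add_right (Commute.one_right g)).pow_pow m m
  intro x hx
  obtain ⟨z, rfl⟩ := hbij.2 x
  have hz : ((g + 1) ^ m) z = 0 := hbij.1 <| by
    rw [map_zero]
    exact (LinearMap.congr_fun hcomm z).trans hx
  rintro _ ⟨y, rfl⟩
  rw [hs.eq, apply_pow_add_one_pow_of_isOrthogonal hg, hz, map_zero, LinearMap.zero_apply]

/-- The involution of `V = p ⊕ q` that is `-1` on `p` and `1` on `q`. -/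
noncomputable def signInvolution (h : IsCompl p q) : Module.End K V :=
  LinearMap.ofIsCompl h (-p.subtype) q.subtype

namespace signInvolution

variable {h : IsCompl p q} {x y : V}

lemma apply_add (h : IsCompl p q) (hx : x ∈ p) (hy : y ∈ q) :
    signInvolution h (x + y) = -x + y :=
  (map_add _ x y).trans <| congrArg₂ (· + ·) (LinearMap.ofIsCompl_apply_left h ⟨x, hx⟩)
    (LinearMap.ofIsCompl_apply_right h ⟨y, hy⟩)

lemma mul_self (h : IsCompl p q) : signInvolution h * signInvolution h = 1 := by
  ext z
  obtain ⟨x, hx, y, hy, rfl⟩ := Submodule.mem_sup.1 (h.sup_eq_top.ge (Submodule.mem_top (x := z)))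
  rw [Module.End.mul_apply, apply_add h hx hy, apply_add h (p.neg_mem hx) hy, neg_neg,
    Module.End.one_apply]

lemma apply_mem (h : IsCompl p q) (hH : H ≤ H ⊓ p ⊔ H ⊓ q) {z : V} (hz : z ∈ H) :
    signInvolution h z ∈ H := by
  obtain ⟨x, hx, y, hy, rfl⟩ := Submodule.mem_sup.1 (hH hz)
  rw [apply_add h hx.2 hy.2]
  exact H.add_mem (H.neg_mem hx.1) hy.1

lemma isOrthogonal (hs : B.IsSymm) (h : IsCompl p q) (hpq : p ≤ B.orthogonal q) :
    B.IsOrthogonal (signInvolution h) := by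
  intro z z'
  obtain ⟨x, hx, y, hy, rfl⟩ := Submodule.mem_sup.1 (h.sup_eq_top.ge (Submodule.mem_top (x := z)))
  obtain ⟨x', hx', y', hy', rfl⟩ :=
    Submodule.mem_sup.1 (h.sup_eq_top.ge (Submodule.mem_top (x := z')))
  have hyx : B y x' = 0 := hpq hx' y hy
  have hxy : B x y' = 0 := (hs.eq x y').trans (hpq hx y' hy')
  rw [apply_add h hx hy, apply_add h hx' hy']
  simp only [map_add, map_neg, LinearMap.add_apply, LinearMap.neg_apply, hxy, hyx]
  ring

lemma eq_zero_of_apply_add_apply_eq_zero [NeZero (2 : K)] {m : ℕ} (hm : m ≠ 0)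
    (h : IsCompl (LinearMap.ker ((g + 1) ^ m)) (LinearMap.range ((g + 1) ^ m))) {x : V}
    (hx : g x + signInvolution h x = 0) : x = 0 := by
  have hcomm : Commute g ((g + 1) ^ m) :=
    ((Commute.refl g).add_right (Commute.one_right g)).pow_right m
  obtain ⟨y, hy, z, hz, rfl⟩ := Submodule.mem_sup.1 (h.sup_eq_top.ge (Submodule.mem_top (x := x)))
  have hgy : g y - y ∈ LinearMap.ker ((g + 1) ^ m) := by
    refine Submodule.sub_mem _ ?_ hy
    rw [LinearMap.mem_ker, ← Module.End.mul_apply, ← hcomm.eq, Module.End.mul_apply, hy, map_zero]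
  have hgz : (g + 1) z ∈ LinearMap.range ((g + 1) ^ m) := by
    obtain ⟨w, rfl⟩ := hz
    refine Submodule.add_mem _ ⟨g w, ?_⟩ ⟨w, rfl⟩
    rw [← Module.End.mul_apply, ← hcomm.eq, Module.End.mul_apply]
  have hsum : g y - y + (g + 1) z = 0 := by
    rw [← hx, apply_add h hy hz, map_add, LinearMap.add_apply, Module.End.one_apply]
    abel
  have hgy0 : g y - y = 0 := Submodule.disjoint_def.1 h.disjoint _ hgy
    (eq_neg_of_add_eq_zero_left hsum ▸ Submodule.neg_mem _ hgz)
  have hgz0 : (g + 1) z = 0 := by rwa [hgy0, zero_add] at hsum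
  have hy0 : y = 0 := by
    by_contra hne
    have heig : (g + 1).HasEigenvector 2 y := ⟨Module.End.mem_eigenspace_iff.2 <| by
      rw [LinearMap.add_apply, sub_eq_zero.1 hgy0, Module.End.one_apply, two_smul], hne⟩
    exact (smul_eq_zero.1 ((heig.pow_apply m).symm.trans hy)).elim (pow_ne_zero m two_ne_zero) hne
  have hz0 : z = 0 := by
    refine Submodule.disjoint_def.1 h.disjoint _ ?_ hz
    rw [LinearMap.mem_ker, ← Nat.succ_pred_eq_of_ne_zero hm, pow_succ, Module.End.mul_apply,
      hgz0, map_zero]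
  rw [hy0, hz0, add_zero]

end signInvolution

/-- The involution is `-1` on the generalized eigenspace of `g` for the eigenvalue `-1`
and `1` on its Fitting complement. -/
lemma exists_involution_eq_zero_of_apply_eq_neg [FiniteDimensional K V] [NeZero (2 : K)]
    (hB : B.Nondegenerate) (hs : B.IsSymm) (hg : g ∈ isometryStabilizer B H) :
    ∃ σ ∈ isometryStabilizer B H, σ * σ = 1 ∧ ∀ x, (σ * g) x = -x → x = 0 := by
  have hf : ∀ x ∈ H, (g + 1) x ∈ H := fun x hx =>
    H.add_mem (isometryStabilizer.apply_mem hg hx) hx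
  obtain ⟨m, hcompl, hH, hm⟩ := ((g + 1).eventually_isCompl_ker_pow_range_pow.and
    ((eventually_le_ker_pow_sup_range_pow hf).and (eventually_ne_atTop 0))).exists
  have hσσ := signInvolution.mul_self hcompl
  refine ⟨signInvolution hcompl, isometryStabilizer.mem_of_forall_apply_mem hB
    (signInvolution.isOrthogonal hs hcompl (ker_add_one_pow_le_orthogonal_range hB hs hg.1 m))
    fun _ hx => signInvolution.apply_mem hcompl hH hx, hσσ, fun x hx => ?_⟩
  refine signInvolution.eq_zero_of_apply_add_apply_eq_zero hm hcompl ?_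
  have hσx : signInvolution hcompl x = -g x := by
    rw [eq_neg_iff_add_eq_zero, add_comm, ← eq_neg_iff_add_eq_zero, ← map_neg, ← hx,
      ← Module.End.mul_apply, ← mul_assoc, hσσ, one_mul]
  rw [hσx, add_neg_cancel]

end Fitting

section HyperbolicPairs

/-- A pair of isotropic vectors `u`, `v` with `⟨u, v⟩ = 1`. -/
structure IsHyperbolicPair {K V : Type*} [Field K] [AddCommGroup V] [Module K V]
    (B : LinearMap.BilinForm K V) (u v : V) : Prop where
  left : B u u = 0
  right : B v v = 0
  apply_eq_one : B u v = 1

variable {K V : Type*} [Field K] [NeZero (2 : K)] [AddCommGroup V] [Module K V]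
  {B : LinearMap.BilinForm K V} {W : Submodule K V} {u : V}

lemma exists_isHyperbolicPair_of_isotropic (hs : B.IsSymm) (hu : u ∈ W) (huu : B u u = 0)
    (h : ∃ w ∈ W, B u w ≠ 0) : ∃ v ∈ W, IsHyperbolicPair B u v := by
  obtain ⟨w, hw, huw⟩ := h
  have h2 : (2 : K) ≠ 0 := two_ne_zero
  refine ⟨(B u w)⁻¹ • (w - (B w w / (2 * B u w)) • u),
    W.smul_mem _ (W.sub_mem hw (W.smul_mem _ hu)), huu, ?_, ?_⟩
  · simp only [map_sub, map_smul, LinearMap.sub_apply, LinearMap.smul_apply, smul_eq_mul,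
      hs.eq w u, huu]
    field_simp
    ring
  · simp only [map_sub, map_smul, smul_eq_mul, huu, mul_zero, sub_zero, inv_mul_cancel₀ huw]

lemma exists_isotropic_ne_zero [IsAlgClosed K] (hs : B.IsSymm) (hV : 1 < finrank K V) :
    ∃ u ≠ 0, B u u = 0 := by
  have : Nontrivial V := nontrivial_of_finrank_pos (zero_lt_one.trans hV)
  obtain ⟨y, hy⟩ := exists_ne (0 : V)
  by_cases hyy : B y y = 0
  · exact ⟨y, hy, hyy⟩
  obtain ⟨x, hyx⟩ := exists_linearIndependent_pair_of_one_lt_finrank hV hy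
  obtain ⟨t, ht⟩ := exists_quadratic_eq_zero (b := 2 * B x y) (c := B x x) hyy
    (IsAlgClosed.exists_eq_mul_self _)
  refine ⟨t • y + (1 : K) • x, fun h0 => ?_, ?_⟩
  · exact one_ne_zero (LinearIndependent.pair_iff.1 hyx t 1 h0).2
  · simp only [one_smul, map_add, map_smul, LinearMap.add_apply, LinearMap.smul_apply, smul_eq_mul,
      hs.eq y x]
    linear_combination ht

lemma exists_isHyperbolicPair_of_one_lt_finrank [IsAlgClosed K] (hs : B.IsSymm)
    (hW : (B.restrict W).Nondegenerate) (h : 1 < finrank K W) :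
    ∃ u ∈ W, ∃ v ∈ W, IsHyperbolicPair B u v := by
  obtain ⟨u, hu, huu⟩ := exists_isotropic_ne_zero (hs.restrict W) h
  obtain ⟨w, hw⟩ : ∃ w, B.restrict W u w ≠ 0 := by
    by_contra! h0
    exact hu (hW.1 u h0)
  exact ⟨u, u.2, exists_isHyperbolicPair_of_isotropic hs u.2 huu ⟨w, w.2, hw⟩⟩

end HyperbolicPairs

lemma neg_one_ne_one_of_neZero_two {R : Type*} [Ring R] [NeZero (2 : R)] : (-1 : R) ≠ 1 :=
  fun h => two_ne_zero (one_add_one_eq_two.symm.trans (neg_eq_iff_add_eq_zero.1 h))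

section Involutions

variable {K V : Type*} [Field K] [AddCommGroup V] [Module K V]
  {B : LinearMap.BilinForm K V} {H M : Submodule K V} {σ : Module.End K V} {x y : V}

lemma mem_eigenspace_neg_one_iff : x ∈ σ.eigenspace (-1) ↔ σ x = -x := by
  rw [Module.End.mem_eigenspace_iff, neg_one_smul]

lemma sub_apply_mem_eigenspace_neg_one (hσ : σ * σ = 1) (x : V) :
    x - σ x ∈ σ.eigenspace (-1) := by
  rw [mem_eigenspace_neg_one_iff, map_sub, ← Module.End.mul_apply, hσ, Module.End.one_apply,
    neg_sub]

lemma apply_apply_of_mem_eigenspace_neg_one (hσB : B.IsOrthogonal σ)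
    (hy : y ∈ σ.eigenspace (-1)) (x : V) : B y (σ x) = -B y x := by
  rw [← hσB y x, mem_eigenspace_neg_one_iff.1 hy, map_neg, LinearMap.neg_apply, neg_neg]

lemma apply_sub_apply_of_mem_eigenspace_neg_one (hσB : B.IsOrthogonal σ)
    (hy : y ∈ σ.eigenspace (-1)) (x : V) : B y (x - σ x) = 2 * B y x := by
  rw [map_sub, apply_apply_of_mem_eigenspace_neg_one hσB hy, sub_neg_eq_add, two_mul]

lemma exists_eq_orthogonalReflection_of_finrank_eq_one (hσB : B.IsOrthogonal σ)
    (hσ : σ * σ = 1) (hM : ∀ x ∈ M, σ x ∈ M)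
    (hnd : (B.restrict (σ.eigenspace (-1) ⊓ M)).Nondegenerate)
    (hone : finrank K ↥(σ.eigenspace (-1) ⊓ M) = 1) :
    ∃ a ∈ M, B a a ≠ 0 ∧ ∀ x ∈ M, σ x = orthogonalReflection B a x := by
  obtain ⟨⟨a, haN, haM⟩, ha0, hspan⟩ := finrank_eq_one_iff'.1 hone
  have haa : B a a ≠ 0 := fun haa => ha0 <| hnd.1 _ fun y => by
    obtain ⟨c, rfl⟩ := hspan y
    exact ((B a).map_smul c a).trans (by rw [haa, smul_zero])
  refine ⟨a, haM, haa, fun x hx => ?_⟩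
  obtain ⟨c, hc⟩ := hspan ⟨x - σ x, sub_apply_mem_eigenspace_neg_one hσ x, M.sub_mem hx (hM x hx)⟩
  have hxc : x - σ x = c • a := congrArg Subtype.val hc.symm
  have hcoef : c = 2 / B a a * B a x := by
    have := apply_sub_apply_of_mem_eigenspace_neg_one hσB haN x
    rw [hxc, map_smul, smul_eq_mul] at this
    field_simp
    exact this
  rw [orthogonalReflection_apply, ← hcoef, ← hxc, sub_sub_cancel]

variable [NeZero (2 : K)]

lemma mem_orthogonal_of_mem_eigenspace_neg_one (hs : B.IsSymm) (hσB : B.IsOrthogonal σ)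
    (hσ : σ * σ = 1) (hM : ∀ x ∈ M, σ x ∈ M) (hy : y ∈ σ.eigenspace (-1))
    (hyM : ∀ z ∈ σ.eigenspace (-1) ⊓ M, B y z = 0) : y ∈ B.orthogonal M := by
  refine LinearMap.BilinForm.mem_orthogonal_iff.2 fun x hx => ?_
  have h2 : 2 * B y x = 0 := by
    rw [← apply_sub_apply_of_mem_eigenspace_neg_one hσB hy]
    exact hyM _ ⟨sub_apply_mem_eigenspace_neg_one hσ x, M.sub_mem hx (hM x hx)⟩
  exact (hs.eq x y).trans ((mul_eq_zero.1 h2).resolve_left two_ne_zero)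

lemma nondegenerate_restrict_eigenspace_neg_one_inf (hs : B.IsSymm) (hσB : B.IsOrthogonal σ)
    (hσ : σ * σ = 1) (hM : ∀ x ∈ M, σ x ∈ M)
    (hdisj : Disjoint (σ.eigenspace (-1) ⊓ M) (B.orthogonal M)) :
    (B.restrict (σ.eigenspace (-1) ⊓ M)).Nondegenerate := by
  refine LinearMap.BilinForm.nondegenerate_restrict_of_disjoint_orthogonal B hs.isRefl
    (Submodule.disjoint_def.2 fun y hy hy' => Submodule.disjoint_def.1 hdisj y hy ?_)
  exact mem_orthogonal_of_mem_eigenspace_neg_one hs hσB hσ hM hy.1 fun z hz =>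
    (hs.eq y z).trans (hy' z hz)

lemma exists_isHyperbolicPair_of_mem_eigenspace_neg_one (hB : B.Nondegenerate) (hs : B.IsSymm)
    (hσB : B.IsOrthogonal σ) (hσ : σ * σ = 1) {u : V} (hu : u ∈ σ.eigenspace (-1)) (hu0 : u ≠ 0)
    (huu : B u u = 0) : ∃ v ∈ σ.eigenspace (-1), IsHyperbolicPair B u v := by
  obtain ⟨x, hx⟩ : ∃ x, B u x ≠ 0 := by
    by_contra! h0
    exact hu0 (hB.1 u h0)
  refine exists_isHyperbolicPair_of_isotropic hs hu huu
    ⟨x - σ x, sub_apply_mem_eigenspace_neg_one hσ x, ?_⟩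
  rw [apply_sub_apply_of_mem_eigenspace_neg_one hσB hu]
  exact mul_ne_zero two_ne_zero hx

variable [IsAlgClosed K] [FiniteDimensional K V]

lemma exists_isHyperbolicPair_of_ne_orthogonalReflection (hs : B.IsSymm) (hσB : B.IsOrthogonal σ)
    (hσ : σ * σ = 1) (hM : ∀ x ∈ M, σ x ∈ M)
    (hdisj : Disjoint (σ.eigenspace (-1) ⊓ M) (B.orthogonal M))
    (hne : σ.eigenspace (-1) ⊓ M ≠ ⊥)
    (hrefl : ∀ a ∈ M, B a a ≠ 0 → ¬∀ x ∈ M, σ x = orthogonalReflection B a x) :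
    ∃ u ∈ σ.eigenspace (-1) ⊓ M, ∃ v ∈ σ.eigenspace (-1) ⊓ M, IsHyperbolicPair B u v := by
  have hnd := nondegenerate_restrict_eigenspace_neg_one_inf hs hσB hσ hM hdisj
  have hone : finrank K ↥(σ.eigenspace (-1) ⊓ M) ≠ 1 := fun hone => by
    obtain ⟨a, ha, haa, h⟩ := exists_eq_orthogonalReflection_of_finrank_eq_one hσB hσ hM hnd hone
    exact hrefl a ha haa h
  have hpos : finrank K ↥(σ.eigenspace (-1) ⊓ M) ≠ 0 := fun h0 =>
    hne (Submodule.finrank_eq_zero.1 h0)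
  exact exists_isHyperbolicPair_of_one_lt_finrank hs hnd (by omega)

lemma exists_isHyperbolicPair_eigenspace_neg_one (hB : B.Nondegenerate) (hs : B.IsSymm)
    (hσB : B.IsOrthogonal σ) (hσ : σ * σ = 1) (hne : σ ≠ 1) (hdet : LinearMap.det σ = 1) :
    ∃ u ∈ σ.eigenspace (-1), ∃ v ∈ σ.eigenspace (-1), IsHyperbolicPair B u v := by
  obtain ⟨x, hx⟩ : ∃ x, σ x ≠ x := by
    by_contra! h
    exact hne (LinearMap.ext h)
  obtain ⟨u, hu, v, hv, huv⟩ := exists_isHyperbolicPair_of_ne_orthogonalReflection (M := ⊤) hs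
    hσB hσ (fun _ _ => Submodule.mem_top)
    (LinearMap.BilinForm.orthogonal_top_eq_bot hB ▸ disjoint_bot_right)
    (fun hbot => hx (sub_eq_zero.1 ((Submodule.mem_bot K).1 (hbot.le
      ⟨sub_apply_mem_eigenspace_neg_one hσ x, Submodule.mem_top⟩))).symm)
    fun a _ haa h => neg_one_ne_one_of_neZero_two <| by
      have hσa : σ = orthogonalReflection B a := LinearMap.ext fun x => h x Submodule.mem_top
      rw [← det_orthogonalReflection haa, ← hσa, hdet]
  exact ⟨u, hu.1, v, hv.1, huv⟩

/-- The three positions of a hyperbolic pair `u`, `v` relative to `H` in which the torus scaling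
`u` by `t` and `v` by `t⁻¹` stabilizes `H`. -/
def IsAdaptedPair {K V : Type*} [Field K] [AddCommGroup V] [Module K V]
    (B : LinearMap.BilinForm K V) (H : Submodule K V) (u v : V) : Prop :=
  u ∈ H ⊓ B.orthogonal H ∨ (u ∈ H ∧ v ∈ H) ∨ (u ∈ B.orthogonal H ∧ v ∈ B.orthogonal H)

lemma exists_isAdaptedPair_eigenspace_neg_one (hB : B.Nondegenerate) (hs : B.IsSymm)
    {σ : isometryStabilizer B H} (hσ : σ * σ = 1) (hne : σ ≠ 1)
    (hdet : LinearMap.det (σ : Module.End K V) = 1) (hquot : quotientDet B H σ = 1) :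
    ∃ u ∈ (σ : Module.End K V).eigenspace (-1), ∃ v ∈ (σ : Module.End K V).eigenspace (-1),
      IsHyperbolicPair B u v ∧ IsAdaptedPair B H u v := by
  obtain ⟨σ, hσS⟩ := σ
  replace hσ : σ * σ = 1 := congrArg Subtype.val hσ
  have hσH : ∀ x ∈ H, σ x ∈ H := fun _ => isometryStabilizer.apply_mem hσS
  by_cases hrad : Disjoint (σ.eigenspace (-1) ⊓ H) (B.orthogonal H)
  · by_cases hNH : σ.eigenspace (-1) ⊓ H = ⊥
    · have hN : σ.eigenspace (-1) ≤ B.orthogonal H := fun y hy =>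
        mem_orthogonal_of_mem_eigenspace_neg_one hs hσS.1 hσ hσH hy fun z hz => by
          rw [(Submodule.mem_bot K).1 (hNH.le hz), map_zero]
      obtain ⟨u, hu, v, hv, huv⟩ := exists_isHyperbolicPair_eigenspace_neg_one hB hs hσS.1 hσ
        (fun h => hne (Subtype.ext h)) hdet
      exact ⟨u, hu, v, hv, huv, Or.inr (Or.inr ⟨hN hu, hN hv⟩)⟩
    · obtain ⟨u, hu, v, hv, huv⟩ := exists_isHyperbolicPair_of_ne_orthogonalReflection hs hσS.1 hσ
        hσH hrad hNH fun a ha haa h =>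
          neg_one_ne_one_of_neZero_two ((quotientDet_eq_neg_one hs ha haa h).symm.trans hquot)
      exact ⟨u, hu.1, v, hv.1, huv, Or.inr (Or.inl ⟨hu.2, hv.2⟩)⟩
  · obtain ⟨u, ⟨hu, huH⟩, huH', hu0⟩ :
        ∃ u ∈ σ.eigenspace (-1) ⊓ H, u ∈ B.orthogonal H ∧ u ≠ 0 := by
      simpa only [Submodule.disjoint_def, not_forall, exists_prop] using hrad
    obtain ⟨v, hv, huv⟩ :=
      exists_isHyperbolicPair_of_mem_eigenspace_neg_one hB hs hσS.1 hσ hu hu0 (huH' u huH)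
    exact ⟨u, hu, v, hv, huv, Or.inl ⟨huH, huH'⟩⟩

end Involutions

section Torus

variable {K V : Type*} [Field K] [AddCommGroup V] [Module K V]
  {B : LinearMap.BilinForm K V} {H : Submodule K V} {u v : V} {σ : Module.End K V}

/-- For a hyperbolic pair `u`, `v`, the map that scales `u` by `t` and `v` by `t⁻¹` and is the
identity on the orthogonal complement of their span. -/
noncomputable def hyperbolicTorus (B : LinearMap.BilinForm K V) (u v : V) (t : K) :
    Module.End K V :=
  1 + (t - 1) • (B v).smulRight u + (t⁻¹ - 1) • (B u).smulRight v

namespace hyperbolicTorus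

lemma apply (B : LinearMap.BilinForm K V) (u v : V) (t : K) (x : V) :
    hyperbolicTorus B u v t x = x + ((t - 1) * B v x) • u + ((t⁻¹ - 1) * B u x) • v := by
  simp only [hyperbolicTorus, LinearMap.add_apply, LinearMap.smul_apply, LinearMap.smulRight_apply,
    Module.End.one_apply, smul_smul]

lemma isOrthogonal (hs : B.IsSymm) (huv : IsHyperbolicPair B u v) {t : K} (ht : t ≠ 0) :
    B.IsOrthogonal (hyperbolicTorus B u v t) := fun x y => by
  simp only [apply, map_add, map_smul, LinearMap.add_apply, LinearMap.smul_apply, smul_eq_mul,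
    huv.left, huv.right, huv.apply_eq_one, (hs.eq v u).trans huv.apply_eq_one, hs.eq x u,
    hs.eq x v]
  field_simp
  ring

lemma mem_isometryStabilizer [FiniteDimensional K V] (hB : B.Nondegenerate) (hs : B.IsSymm)
    (huv : IsHyperbolicPair B u v) (hH : IsAdaptedPair B H u v) {t : K} (ht : t ≠ 0) :
    hyperbolicTorus B u v t ∈ isometryStabilizer B H := by
  refine isometryStabilizer.mem_of_forall_apply_mem hB (isOrthogonal hs huv ht) fun x hx => ?_
  have horth {w : V} (hw : w ∈ B.orthogonal H) : B w x = 0 := (hs.eq w x).trans (hw x hx)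
  rw [apply]
  rcases hH with hu | ⟨hu, hv⟩ | ⟨hu, hv⟩
  · rw [horth hu.2, mul_zero, zero_smul, add_zero]
    exact H.add_mem hx (H.smul_mem _ hu.1)
  · exact H.add_mem (H.add_mem hx (H.smul_mem _ hu)) (H.smul_mem _ hv)
  · rwa [horth hu, horth hv, mul_zero, mul_zero, zero_smul, zero_smul, add_zero, add_zero]

lemma one (B : LinearMap.BilinForm K V) (u v : V) : hyperbolicTorus B u v 1 = 1 := by
  simp only [hyperbolicTorus, inv_one, sub_self, zero_smul, add_zero]

lemma neg_one_apply (B : LinearMap.BilinForm K V) (u v x : V) :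
    hyperbolicTorus B u v (-1) x = x - ((2 * B v x) • u + (2 * B u x) • v) := by
  rw [apply, inv_neg_one]
  module

lemma neg_one_apply_left (hs : B.IsSymm) (huv : IsHyperbolicPair B u v) :
    hyperbolicTorus B u v (-1) u = -u := by
  rw [neg_one_apply, hs.eq v u, huv.apply_eq_one, huv.left]
  module

lemma neg_one_apply_right (huv : IsHyperbolicPair B u v) :
    hyperbolicTorus B u v (-1) v = -v := by
  rw [neg_one_apply, huv.right, huv.apply_eq_one]
  module

lemma neg_one_mul_self (hs : B.IsSymm) (huv : IsHyperbolicPair B u v) :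
    hyperbolicTorus B u v (-1) * hyperbolicTorus B u v (-1) = 1 := by
  ext x
  rw [Module.End.mul_apply, neg_one_apply B u v x, map_sub, map_add, map_smul, map_smul,
    neg_one_apply_left hs huv, neg_one_apply_right huv, neg_one_apply, Module.End.one_apply]
  module

lemma commute_neg_one (hσB : B.IsOrthogonal σ) (hu : u ∈ σ.eigenspace (-1))
    (hv : v ∈ σ.eigenspace (-1)) : Commute σ (hyperbolicTorus B u v (-1)) := by
  ext x
  rw [Module.End.mul_apply, Module.End.mul_apply, neg_one_apply, neg_one_apply,
    apply_apply_of_mem_eigenspace_neg_one hσB hu, apply_apply_of_mem_eigenspace_neg_one hσB hv,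
    map_sub, map_add, map_smul, map_smul, mem_eigenspace_neg_one_iff.1 hu,
    mem_eigenspace_neg_one_iff.1 hv]
  module

lemma eigenspace_mul_neg_one_lt [NeZero (2 : K)] (hs : B.IsSymm) (hσ : σ * σ = 1)
    (huv : IsHyperbolicPair B u v) (hu : u ∈ σ.eigenspace (-1)) (hv : v ∈ σ.eigenspace (-1)) :
    (σ * hyperbolicTorus B u v (-1)).eigenspace (-1) < σ.eigenspace (-1) := by
  have hτσ {x : V} (hx : x ∈ (σ * hyperbolicTorus B u v (-1)).eigenspace (-1)) :
      hyperbolicTorus B u v (-1) x = -σ x := by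
    rw [← map_neg, ← mem_eigenspace_neg_one_iff.1 hx, ← Module.End.mul_apply, ← mul_assoc, hσ,
      one_mul]
  refine SetLike.lt_iff_le_and_exists.2 ⟨fun x hx => ?_, u, hu, fun hu' => ?_⟩
  · have hfix : σ (x + σ x) = x + σ x := by
      rw [map_add, ← Module.End.mul_apply, hσ, Module.End.one_apply, add_comm]
    have hmem : x + σ x ∈ σ.eigenspace (-1) := by
      have hxσ : x + σ x = (2 * B v x) • u + (2 * B u x) • v := by
        linear_combination (norm := module) (neg_one_apply B u v x).symm.trans (hτσ hx)
      rw [hxσ]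
      exact Submodule.add_mem _ (Submodule.smul_mem _ _ hu) (Submodule.smul_mem _ _ hv)
    have h2 : (2 : K) • (x + σ x) = 0 := by
      rw [two_smul, ← eq_neg_iff_add_eq_zero, ← mem_eigenspace_neg_one_iff.1 hmem, hfix]
    rw [mem_eigenspace_neg_one_iff, eq_neg_iff_add_eq_zero, add_comm]
    exact (smul_eq_zero.1 h2).resolve_left two_ne_zero
  · have huu : -u = u := by
      rw [← neg_one_apply_left hs huv, hτσ hu', mem_eigenspace_neg_one_iff.1 hu, neg_neg]
    have h11 : (-1 : K) = 1 := by
      rw [← huv.apply_eq_one, ← LinearMap.neg_apply, ← map_neg, huu]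
    exact neg_one_ne_one_of_neZero_two h11

end hyperbolicTorus

end Torus

section Cayley

variable {K V : Type*} [Field K] [AddCommGroup V] [Module K V]
  {B : LinearMap.BilinForm K V} {H : Submodule K V} {h D N : Module.End K V}

/-- The Cayley family through `1 - 2 • h`: its value is `1 - 2 • h` at `s = 0` and, if `1 - h` is
invertible, `1` at `s = 1`. Where `1 - s • h` is not invertible, `Ring.inverse` makes it `0`. -/
noncomputable def cayleyFamily (h : Module.End K V) (s : K) : Module.End K V :=
  (1 - (2 - s) • h) * Ring.inverse (1 - s • h)

lemma cayleyFamily_zero (h : Module.End K V) : cayleyFamily h 0 = 1 - (2 : K) • h := by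
  rw [cayleyFamily, sub_zero, zero_smul, sub_zero, Ring.inverse_one, mul_one]

lemma cayleyFamily_one (hh : IsUnit (1 - h)) : cayleyFamily h (1 : K) = 1 := by
  have h21 : (2 : K) - 1 = 1 := by norm_num
  rw [cayleyFamily, h21, one_smul, Ring.mul_inverse_cancel _ hh]

variable [FiniteDimensional K V]

lemma finite_setOf_not_isUnit_one_sub_smul (h : Module.End K V) :
    {s : K | ¬IsUnit (1 - s • h)}.Finite := by
  refine ((Module.End.finite_spectrum h).preimage inv_injective.injOn).subset fun s hs => ?_
  have hs0 : s ≠ 0 := by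
    rintro rfl
    exact hs (by rw [zero_smul, sub_zero]; exact isUnit_one)
  rw [Set.mem_preimage, spectrum.mem_iff, Algebra.algebraMap_eq_smul_one]
  exact fun hunit => hs <| by
    simpa using! (IsUnit.smul_sub_iff_sub_inv_smul (Units.mk0 s hs0)⁻¹ h).1 hunit

lemma inverse_apply_mem (hD : IsUnit D) (hDH : ∀ x ∈ H, D x ∈ H) {x : V} (hx : x ∈ H) :
    Ring.inverse D x ∈ H := by
  obtain ⟨u, rfl⟩ := hD
  have hinj : Function.Injective (u : Module.End K V) :=
    ((Module.End.isUnit_iff _).1 u.isUnit).1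
  have hmap : H.map (u : Module.End K V) = H :=
    Submodule.eq_of_le_of_finrank_eq (Submodule.map_le_iff_le_comap.2 hDH)
      (H.equivMapOfInjective _ hinj).finrank_eq.symm
  obtain ⟨z, hz, rfl⟩ := Submodule.mem_map.1 (hmap.ge hx)
  rwa [Ring.inverse_unit, ← Module.End.mul_apply, Units.inv_mul]

lemma mul_inverse_mem_isometryStabilizer (hB : B.Nondegenerate) (hD : IsUnit D)
    (hDH : ∀ x ∈ H, D x ∈ H) (hNH : ∀ x ∈ H, N x ∈ H)
    (hND : ∀ x y, B (N x) (N y) = B (D x) (D y)) :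
    N * Ring.inverse D ∈ isometryStabilizer B H := by
  refine isometryStabilizer.mem_of_forall_apply_mem hB (fun x y => ?_)
    fun x hx => hNH _ (inverse_apply_mem hD hDH hx)
  have hinv (x : V) : D (Ring.inverse D x) = x :=
    LinearMap.congr_fun (Ring.mul_inverse_cancel D hD) x
  rw [Module.End.mul_apply, Module.End.mul_apply, hND, hinv, hinv]

lemma cayleyFamily_mem_isometryStabilizer (hB : B.Nondegenerate) (hhH : ∀ x ∈ H, h x ∈ H)
    (hh : ∀ x y, B (h x) y + B x (h y) = 2 * B (h x) (h y)) {s : K} (hs : IsUnit (1 - s • h)) :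
    cayleyFamily h s ∈ isometryStabilizer B H := by
  have hmem (c : K) : ∀ x ∈ H, (1 - c • h) x ∈ H := fun x hx =>
    H.sub_mem hx (H.smul_mem c (hhH x hx))
  refine mul_inverse_mem_isometryStabilizer hB hs (hmem s) (hmem (2 - s)) fun x y => ?_
  simp only [LinearMap.sub_apply, LinearMap.smul_apply, Module.End.one_apply, map_sub, map_smul,
    smul_eq_mul]
  linear_combination (2 * s - 2) * hh x y

end Cayley

section Topology

variable {V : Type*} [NormedAddCommGroup V] [NormedSpace ℂ V] [FiniteDimensional ℂ V]
  {B : LinearMap.BilinForm ℂ V} {H : Submodule ℂ V}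

/-- The operator norm on `Module.End ℂ V`, for `V` finite-dimensional. -/
noncomputable abbrev endNormedRing : NormedRing (Module.End ℂ V) :=
  NormedRing.induced _ _ (Module.End.toContinuousLinearMap V)
    (Module.End.toContinuousLinearMap V).injective

attribute [local instance] endNormedRing

/-- `Module.End ℂ V` is a normed algebra for the operator norm. -/
noncomputable abbrev endNormedAlgebra : NormedAlgebra ℂ (Module.End ℂ V) :=
  NormedAlgebra.induced ℂ _ _ (Module.End.toContinuousLinearMap V)

attribute [local instance] endNormedAlgebra

lemma continuous_det_apply {E Q : Type*} [AddCommGroup E] [Module ℂ E] [TopologicalSpace E]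
    [IsTopologicalAddGroup E] [ContinuousSMul ℂ E] [T2Space E] [FiniteDimensional ℂ E]
    [AddCommGroup Q] [Module ℂ Q] [FiniteDimensional ℂ Q] (F : E →ₗ[ℂ] Module.End ℂ Q) :
    Continuous fun x => LinearMap.det (F x) := by
  let b := finBasis ℂ Q
  simp only [← LinearMap.det_toMatrix b]
  exact (((LinearMap.toMatrix b b).toLinearMap ∘ₗ F).continuous_of_finiteDimensional).matrix_det

lemma continuous_det : Continuous fun g : Module.End ℂ V => LinearMap.det g :=
  continuous_det_apply LinearMap.id

lemma continuous_quotientDet (B : LinearMap.BilinForm ℂ V) (H : Submodule ℂ V) :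
    Continuous (quotientDet B H) := by
  let mk := (LinearMap.ker (B.restrict H)).mkQ
  obtain ⟨s, hs⟩ := mk.exists_rightInverse_of_surjective
    (LinearMap.range_eq_top.2 (Submodule.mkQ_surjective _))
  obtain ⟨π, hπ⟩ := LinearMap.exists_extend mk
  let F : Module.End ℂ V →ₗ[ℂ] Module.End ℂ (RadicalQuotient B H) :=
    (LinearMap.llcomp ℂ _ _ _ π) ∘ₗ LinearMap.lcomp ℂ V (H.subtype ∘ₗ s)
  have hF (g : isometryStabilizer B H) : quotientAction B H g = F g := LinearMap.ext fun q => by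
    have hmk : mk (s q) = q := LinearMap.congr_fun hs q
    calc quotientAction B H g q = quotientAction B H g (mk (s q)) := by rw [hmk]
      _ = mk ⟨(g : Module.End ℂ V) (s q), isometryStabilizer.apply_mem g.2 (s q).2⟩ := rfl
      _ = F g q := (LinearMap.congr_fun hπ _).symm
  have hdet : ⇑(quotientDet B H) = fun g : isometryStabilizer B H => LinearMap.det (F g) :=
    funext fun g => congrArg LinearMap.det (hF g)
  exact hdet ▸ (continuous_det_apply F).comp continuous_subtype_val

lemma joinedIn_of_mapsTo_compl_finite {X : Type*} [TopologicalSpace X] {S : Set X} {F : Set ℂ}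
    (hF : F.Finite) {f : ℂ → X} (hf : ContinuousOn f Fᶜ) (hfS : Set.MapsTo f Fᶜ S) {s t : ℂ}
    (hs : s ∉ F) (ht : t ∉ F) : JoinedIn S (f s) (f t) := by
  have hpath : IsPathConnected Fᶜ :=
    hF.countable.isPathConnected_compl_of_one_lt_rank (by simp [Complex.rank_real_complex])
  exact ((hpath.joinedIn s hs t ht).map_continuousOn hf).mono hfS.image_subset

lemma continuousOn_cayleyFamily (h : Module.End ℂ V) :
    ContinuousOn (cayleyFamily h) {s | ¬IsUnit (1 - s • h)}ᶜ := by
  have : CompleteSpace (Module.End ℂ V) := FiniteDimensional.complete ℂ _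
  intro s hs
  obtain ⟨u, hu⟩ := not_not.1 hs
  have hinv : ContinuousAt Ring.inverse (1 - s • h) := hu ▸ NormedRing.inverse_continuousAt u
  have hden : ContinuousAt (fun s : ℂ => 1 - s • h) s := by fun_prop
  have hnum : ContinuousAt (fun s : ℂ => 1 - (2 - s) • h) s := by fun_prop
  exact (hnum.mul (ContinuousAt.comp (f := fun s : ℂ => 1 - s • h) hinv hden)).continuousWithinAt

lemma joined_one_of_forall_apply_eq_neg (hB : B.Nondegenerate) (g : isometryStabilizer B H)
    (hg : ∀ x, (g : Module.End ℂ V) x = -x → x = 0) : Joined 1 g := by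
  obtain ⟨g, hgS⟩ := g
  let h : Module.End ℂ V := (2⁻¹ : ℂ) • (1 - g)
  have hhH : ∀ x ∈ H, h x ∈ H := fun x hx =>
    H.smul_mem _ (H.sub_mem hx (isometryStabilizer.apply_mem hgS hx))
  have hhB (x y : V) : B (h x) y + B x (h y) = 2 * B (h x) (h y) := by
    simp only [h, LinearMap.smul_apply, LinearMap.sub_apply, Module.End.one_apply, map_smul,
      map_sub, smul_eq_mul, hgS.1 x y]
    ring
  have hunit : IsUnit (1 - h) := (LinearMap.isUnit_iff_ker_eq_bot _).2 <|
    LinearMap.ker_eq_bot'.2 fun x hx => hg x <| by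
      have hfix : x = (2⁻¹ : ℂ) • (x - g x) := sub_eq_zero.1 hx
      have htwo : (2 : ℂ) • x = x - g x := by rw [eq_comm, ← inv_smul_eq_iff₀ two_ne_zero, ← hfix]
      rw [two_smul, sub_eq_add_neg] at htwo
      exact (neg_eq_iff_eq_neg.1 (add_left_cancel htwo).symm)
  have hjoin := joinedIn_of_mapsTo_compl_finite (S := isometryStabilizer B H)
    (finite_setOf_not_isUnit_one_sub_smul h) (continuousOn_cayleyFamily h)
    (fun s hs => cayleyFamily_mem_isometryStabilizer hB hhH hhB (not_not.1 hs))
    (s := 1) (t := 0) (by simpa using hunit) (by simp)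
  have hzero : cayleyFamily h 0 = g := by
    rw [cayleyFamily_zero, smul_inv_smul₀ two_ne_zero, sub_sub_cancel]
  rw [cayleyFamily_one hunit, hzero] at hjoin
  exact hjoin.joined_subtype

lemma joined_one_hyperbolicTorus (hB : B.Nondegenerate) (hs : B.IsSymm) {u v : V}
    (huv : IsHyperbolicPair B u v) (hH : IsAdaptedPair B H u v) {t : ℂ} (ht : t ≠ 0) :
    Joined (1 : isometryStabilizer B H)
      ⟨hyperbolicTorus B u v t, hyperbolicTorus.mem_isometryStabilizer hB hs huv hH ht⟩ := by
  have hcont : ContinuousOn (hyperbolicTorus B u v) {0}ᶜ := by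
    have hinv : ContinuousOn (fun t : ℂ => t⁻¹) {0}ᶜ := continuousOn_inv₀
    unfold hyperbolicTorus
    fun_prop
  have hjoin := joinedIn_of_mapsTo_compl_finite (S := isometryStabilizer B H)
    (Set.finite_singleton 0) hcont
    (fun t ht => hyperbolicTorus.mem_isometryStabilizer hB hs huv hH ht) one_ne_zero ht
  rw [hyperbolicTorus.one] at hjoin
  exact hjoin.joined_subtype

lemma eq_of_isPreconnected_of_sq_eq_one {X : Type*} [TopologicalSpace X] {S : Set X}
    (hS : IsPreconnected S) {d : X → ℂ} (hd : Continuous d) (hsq : ∀ x, d x ^ 2 = 1) {x y : X}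
    (hx : x ∈ S) (hy : y ∈ S) : d x = d y :=
  hS.constant_of_mapsTo (Set.toFinite {1, -1}).isDiscrete hd.continuousOn
    (fun x _ => sq_eq_one_iff.1 (hsq x)) hx hy

end Topology

section Components

variable {V : Type*} [NormedAddCommGroup V] [NormedSpace ℂ V] [FiniteDimensional ℂ V]
  {B : LinearMap.BilinForm ℂ V} {H : Submodule ℂ V}

attribute [local instance] endNormedRing endNormedAlgebra

lemma eq_of_joined_of_sq_eq_one {X : Type*} [TopologicalSpace X] {d : X → ℂ} (hd : Continuous d)
    (hsq : ∀ x, d x ^ 2 = 1) {x y : X} (h : Joined x y) : d x = d y :=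
  eq_of_isPreconnected_of_sq_eq_one isPreconnected_connectedComponent hd hsq
    mem_connectedComponent (pathComponent_subset_component x h)

lemma det_eq_of_joined (hB : B.Nondegenerate) {g h : isometryStabilizer B H} (hgh : Joined g h) :
    LinearMap.det (g : Module.End ℂ V) = LinearMap.det (h : Module.End ℂ V) :=
  eq_of_joined_of_sq_eq_one (continuous_det.comp continuous_subtype_val)
    (fun g => det_sq_eq_one_of_isOrthogonal hB g.2.1) hgh

lemma quotientDet_eq_of_joined (hs : B.IsSymm) {g h : isometryStabilizer B H}
    (hgh : Joined g h) : quotientDet B H g = quotientDet B H h :=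
  eq_of_joined_of_sq_eq_one (continuous_quotientDet B H) (quotientDet_sq hs) hgh

lemma joined_one_of_mul_self_eq_one (hB : B.Nondegenerate) (hs : B.IsSymm)
    (σ : isometryStabilizer B H) (hσ : σ * σ = 1)
    (hdet : LinearMap.det (σ : Module.End ℂ V) = 1) (hquot : quotientDet B H σ = 1) :
    Joined 1 σ := by
  induction hm : finrank ℂ ((σ : Module.End ℂ V).eigenspace (-1)) using Nat.strong_induction_on
    generalizing σ with
  | _ m ih =>
  rcases eq_or_ne σ 1 with rfl | hne
  · exact .refl 1
  obtain ⟨u, hu, v, hv, huv, hH⟩ := exists_isAdaptedPair_eigenspace_neg_one hB hs hσ hne hdet hquot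
  let τ : isometryStabilizer B H := ⟨hyperbolicTorus B u v (-1),
    hyperbolicTorus.mem_isometryStabilizer hB hs huv hH (neg_ne_zero.2 one_ne_zero)⟩
  have hτ : Joined 1 τ := joined_one_hyperbolicTorus hB hs huv hH (neg_ne_zero.2 one_ne_zero)
  have hττ : τ * τ = 1 := Subtype.ext (hyperbolicTorus.neg_one_mul_self hs huv)
  have hστ : Commute σ τ := Subtype.ext (hyperbolicTorus.commute_neg_one σ.2.1 hu hv)
  have hjoin : Joined σ (σ * τ) := by simpa using (Joined.refl σ).mul hτ
  have hone : Joined 1 (σ * τ) := by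
    refine ih _ ?_ (σ * τ) ?_ ((det_eq_of_joined hB hjoin).symm.trans hdet)
      ((quotientDet_eq_of_joined hs hjoin).symm.trans hquot) rfl
    · rw [← hm]
      exact Submodule.finrank_lt_finrank_of_lt
        (hyperbolicTorus.eigenspace_mul_neg_one_lt hs (congrArg Subtype.val hσ) huv hu hv)
    · rw [hστ.symm.mul_mul_mul_comm, hσ, hττ, one_mul]
  exact hone.trans hjoin.symm

lemma joined_one_of_det_eq_one_of_quotientDet_eq_one (hB : B.Nondegenerate) (hs : B.IsSymm)
    (g : isometryStabilizer B H) (hdet : LinearMap.det (g : Module.End ℂ V) = 1)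
    (hquot : quotientDet B H g = 1) : Joined 1 g := by
  obtain ⟨σ, hσS, hσσ, hσg⟩ := exists_involution_eq_zero_of_apply_eq_neg hB hs g.2
  lift σ to isometryStabilizer B H using hσS
  have hσ : σ * σ = 1 := Subtype.ext hσσ
  have hjoin : Joined 1 (σ * g) := joined_one_of_forall_apply_eq_neg hB _ hσg
  have hσjoin : Joined σ g := by simpa [← mul_assoc, hσ] using (Joined.refl σ).mul hjoin
  exact (joined_one_of_mul_self_eq_one hB hs σ hσ ((det_eq_of_joined hB hσjoin).trans hdet)
    ((quotientDet_eq_of_joined hs hσjoin).trans hquot)).trans hσjoin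

lemma joined_of_det_eq_of_quotientDet_eq (hB : B.Nondegenerate) (hs : B.IsSymm)
    {g h : isometryStabilizer B H}
    (hdet : LinearMap.det (g : Module.End ℂ V) = LinearMap.det (h : Module.End ℂ V))
    (hquot : quotientDet B H g = quotientDet B H h) : Joined g h := by
  obtain ⟨u, rfl⟩ := isometryStabilizer.isUnit hB g
  obtain ⟨f, rfl⟩ : ∃ f, h = u * f := ⟨↑u⁻¹ * h, (u.mul_inv_cancel_left h).symm⟩
  have hone (χ : isometryStabilizer B H →* ℂ) (hχ : χ u = χ (u * f)) : χ f = 1 :=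
    (u.isUnit.map χ).mul_eq_left.1 ((map_mul χ _ _).symm.trans hχ.symm)
  have hf : Joined 1 f := joined_one_of_det_eq_one_of_quotientDet_eq_one hB hs f
    (hone (LinearMap.det.comp (isometryStabilizer B H).subtype) hdet) (hone _ hquot)
  simpa using (Joined.refl (u : isometryStabilizer B H)).mul hf

end Components

section Counting

lemma natCard_connectedComponents_eq_two {X : Type*} [TopologicalSpace X] {d : X → ℂ}
    (hd : Continuous d) (hsq : ∀ x, d x ^ 2 = 1) (hjoin : ∀ x y, d x = d y → Joined x y) {x y : X}
    (hx : d x = 1) (hy : d y = -1) : Nat.card (ConnectedComponents X) = 2 := by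
  have hmk {z w : X} (h : d z = d w) : ConnectedComponents.mk z = ConnectedComponents.mk w :=
    ConnectedComponents.coe_eq_coe'.2 (pathComponent_subset_component w (hjoin w z h.symm))
  refine Nat.card_eq_two_iff.2 ⟨.mk x, .mk y, fun hxy => ?_, Set.eq_univ_of_forall fun q => ?_⟩
  · have heq : d x = d y := eq_of_isPreconnected_of_sq_eq_one isPreconnected_connectedComponent
      hd hsq (ConnectedComponents.coe_eq_coe'.1 hxy) mem_connectedComponent
    norm_num [hx, hy] at heq
  · obtain ⟨z, rfl⟩ := ConnectedComponents.surjective_coe q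
    exact (sq_eq_one_iff.1 (hsq z)).imp (fun hz => hmk (hz.trans hx.symm))
      fun hz => hmk (hz.trans hy.symm)

lemma natCard_connectedComponents_congr {X Y : Type*} [TopologicalSpace X] [TopologicalSpace Y]
    (e : X ≃ₜ Y) : Nat.card (ConnectedComponents X) = Nat.card (ConnectedComponents Y) :=
  Nat.card_congr (e.isQuotientMap.isCoinducing.connectedComponentsHomeomorph fun y => by
    rw [← e.image_symm, Set.image_singleton]
    exact isConnected_singleton).toEquiv

variable {V : Type*} [NormedAddCommGroup V] [NormedSpace ℂ V] [FiniteDimensional ℂ V]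
  {B : LinearMap.BilinForm ℂ V} {H : Submodule ℂ V}

attribute [local instance] endNormedRing endNormedAlgebra

lemma joined_of_quotientDet_eq (hB : B.Nondegenerate) (hs : B.IsSymm)
    (g h : specialIsometryStabilizer B H)
    (hquot : quotientDet B H ⟨g, g.2.1⟩ = quotientDet B H ⟨h, h.2.1⟩) : Joined g h := by
  obtain ⟨γ⟩ := joined_of_det_eq_of_quotientDet_eq hB hs (g.2.2.trans h.2.2.symm) hquot
  have hγ (t : unitInterval) : LinearMap.det (γ t : Module.End ℂ V) = 1 := by
    have hjoin : Joined (γ 0) (γ t) := ⟨γ.subpath 0 t⟩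
    rw [← det_eq_of_joined hB hjoin, γ.source]
    exact g.2.2
  have hjoin : JoinedIn (specialIsometryStabilizer B H) (g : Module.End ℂ V) h :=
    ⟨γ.map continuous_subtype_val, fun t => ⟨(γ t).2, hγ t⟩⟩
  exact hjoin.joined_subtype

lemma natCard_connectedComponents_specialIsometryStabilizer (hB : B.Nondegenerate) (hs : B.IsSymm)
    {a c : V} (ha : a ∈ H) (haa : B a a ≠ 0) (hc : c ∈ B.orthogonal H) (hcc : B c c ≠ 0) :
    Nat.card (ConnectedComponents (specialIsometryStabilizer B H)) = 2 := by
  let ρ : isometryStabilizer B H :=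
    ⟨orthogonalReflection B a, orthogonalReflection_mem_of_mem hB hs ha⟩ *
      ⟨orthogonalReflection B c, orthogonalReflection_mem_of_mem_orthogonal hB hs hc⟩
  have hdet : LinearMap.det (ρ : Module.End ℂ V) = 1 := by
    refine (LinearMap.det_comp _ _).trans ?_
    rw [det_orthogonalReflection haa, det_orthogonalReflection hcc]
    norm_num
  have hquot : quotientDet B H ρ = -1 := quotientDet_eq_neg_one hs ha haa fun x hx =>
    congrArg (orthogonalReflection B a) (orthogonalReflection_apply_of_mem hs hc hx)
  exact natCard_connectedComponents_eq_two
    ((continuous_quotientDet B H).comp (continuous_subtype_val.subtype_mk _))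
    (fun g => quotientDet_sq hs ⟨g, g.2.1⟩) (joined_of_quotientDet_eq hB hs)
    (x := 1) (y := ⟨ρ, ρ.2, hdet⟩) (map_one _) hquot

lemma natCard_connectedComponents_subtype_isometry_det_eq_one (hB : B.Nondegenerate)
    (hs : B.IsSymm) {a c : V} (ha : a ∈ H) (haa : B a a ≠ 0) (hc : c ∈ B.orthogonal H)
    (hcc : B c c ≠ 0) :
    Nat.card (ConnectedComponents
      {g : V →L[ℂ] V // Function.Bijective g ∧ (∀ x y, B (g x) (g y) = B x y) ∧
        LinearMap.det (g : V →ₗ[ℂ] V) = 1 ∧ H.map (g : V →ₗ[ℂ] V) = H}) = 2 := by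
  let e : (V →L[ℂ] V) ≃ₜ Module.End ℂ V :=
    ((Module.End.toContinuousLinearMap V).toEquiv.toHomeomorphOfIsInducing ⟨rfl⟩).symm
  rw [← natCard_connectedComponents_specialIsometryStabilizer hB hs ha haa hc hcc]
  exact natCard_connectedComponents_congr
    (e.subtype fun _ => (mem_specialIsometryStabilizer_iff hB).symm)

end Counting

section Numerics

variable {K V : Type*} [Field K] [NeZero (2 : K)] [AddCommGroup V] [Module K V]
  {B : LinearMap.BilinForm K V} {H : Submodule K V}

lemma exists_mem_apply_self_ne_zero (hs : B.IsSymm) (hH : ¬H ≤ B.orthogonal H) :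
    ∃ a ∈ H, B a a ≠ 0 := by
  have : Invertible (2 : K) := invertibleOfNonzero two_ne_zero
  have hres : B.restrict H ≠ 0 := fun h => hH fun x hx =>
    LinearMap.BilinForm.mem_orthogonal_iff.2 fun y hy => LinearMap.congr_fun₂ h ⟨y, hy⟩ ⟨x, hx⟩
  obtain ⟨a, ha⟩ := LinearMap.BilinForm.exists_bilinForm_self_ne_zero hres
    ⟨(hs.restrict H).eq⟩
  exact ⟨a, a.2, ha⟩

lemma exists_mem_orthogonal_apply_self_ne_zero [FiniteDimensional K V] (hB : B.Nondegenerate)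
    (hs : B.IsSymm) (hH : ¬B.orthogonal H ≤ H) : ∃ c ∈ B.orthogonal H, B c c ≠ 0 :=
  exists_mem_apply_self_ne_zero hs <| by
    rwa [LinearMap.BilinForm.orthogonal_orthogonal hB hs.isRefl]

end Numerics

/-- Proposition 3.9(3) (`prop:orbit-orth`), disconnected case: for a nondegenerate symmetric
form, if `dim H = k`, `dim (H ∩ H^⊥) = k - r` and `max {0, 2k - n} < r`, then the stabilizer
of `H` in `SO(V)` has exactly two connected components.  (The canonical topology of the
finite-dimensional space `End V` is realized via an arbitrary norm on `V`.) -/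
theorem stmt_7 {V : Type*} [NormedAddCommGroup V] [NormedSpace ℂ V] [FiniteDimensional ℂ V]
    (n : ℕ) (hn : finrank ℂ V = n)
    (B : V →ₗ[ℂ] V →ₗ[ℂ] ℂ)
    (hB : ∀ v, (∀ w, B v w = 0) → v = 0)
    (hsymm : ∀ v w, B v w = B w v)
    (H : Submodule ℂ V) (k r : ℕ) (hk : finrank ℂ H = k)
    (hrad : (finrank ℂ ↥(H ⊓ bperp B H) : ℤ) = (k : ℤ) - r)
    (hr : max 0 (2 * (k : ℤ) - n) < (r : ℤ)) :
    Nat.card (ConnectedComponents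
      {g : V →L[ℂ] V // Function.Bijective g ∧ (∀ v w, B (g v) (g w) = B v w) ∧
        LinearMap.det (g : V →ₗ[ℂ] V) = 1 ∧
        Submodule.map (g : V →ₗ[ℂ] V) H = H}) = 2 := by
  have hs : LinearMap.BilinForm.IsSymm B := ⟨hsymm⟩
  have hnd : LinearMap.BilinForm.Nondegenerate B :=
    hs.isRefl.nondegenerate_iff_separatingLeft.2 hB
  have hperp : bperp B H = LinearMap.BilinForm.orthogonal B H := by
    ext x
    exact forall₂_congr fun w _ => by rw [hsymm x w]
  have hH : ¬H ≤ LinearMap.BilinForm.orthogonal B H := fun hle => by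
    rw [hperp, inf_eq_left.2 hle] at hrad
    omega
  have hH' : ¬LinearMap.BilinForm.orthogonal B H ≤ H := fun hle => by
    rw [hperp, inf_eq_right.2 hle, LinearMap.BilinForm.finrank_orthogonal hnd, hn, hk] at hrad
    have hkn : k ≤ n := hk ▸ hn ▸ Submodule.finrank_le H
    omega
  obtain ⟨a, ha, haa⟩ := exists_mem_apply_self_ne_zero hs hH
  obtain ⟨c, hc, hcc⟩ := exists_mem_orthogonal_apply_self_ne_zero hnd hs hH'
  exact natCard_connectedComponents_subtype_isometry_det_eq_one hnd hs ha haa hc hcc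
end

section
/- Let H ⊆ V be a subspace and set R = H ∩ H^⊥. Every isometry g of V with g(H) = H also satisfies g(H^⊥) = H^⊥ and g(R) = R, and hence induces linear automorphisms of R, of H/R, and of H^⊥/R; the induced automorphisms of H/R and H^⊥/R are isometries for the induced nondegenerate forms. The resulting map is surjective: for every linear automorphism a of R, every isometry e of H/R, and every isometry f of H^⊥/R, there exists an isometry g of V with g(H) = H inducing a on R, e on H/R, and f on H^⊥/R. -/
/-!
An isometry `g` with `g H = H` carries `H^⊥` onto `(g H)^⊥ = H^⊥`, hence `R` onto itself, and the
maps it induces on `H/R` and `H^⊥/R` are isometries because `R` is orthogonal to both `H` and `H^⊥`.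

For surjectivity, complements of `R` in `H` and in `H^⊥` turn `(a, e)` and `(a, f)` into
automorphisms of `H` and of `H^⊥` which agree on `R = H ∩ H^⊥`, so they glue to an injective
isometric map `h` on `W = H + H^⊥`. This `W` is coisotropic, `W^⊥ ⊆ H^⊥ ⊆ W`, and for coisotropic
subspaces Witt's extension theorem has a short proof. Nondegeneracy yields an automorphism `g` of
`V` extending `h` with `⟨g x, g y⟩ = ⟨x, y⟩` for `x ∈ V`, `y ∈ W`, so its defect
`D x y = ⟨g x, g y⟩ - ⟨x, y⟩` vanishes as soon as one argument lies in `W`. The map `c` determined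
by `⟨c x, g y⟩ = -D x y / 2` kills `W` and takes values in the totally isotropic `(g W)^⊥`, so
`g + c` is an isometry that still extends `h`.
-/

open Module

section Modules

variable {A V : Type*} [Ring A] [AddCommGroup V] [Module A V]

/-- The subquotient `S / (S ∩ R)` of the ambient module, which is `S / R` when `R ≤ S`. -/
abbrev Subquotient (R S : Submodule A V) : Type _ := S ⧸ R.submoduleOf S

/-- `e` is the automorphism of the subquotient `S / R` induced by the automorphism `g` of the
ambient module. It is phrased through representatives, so that it makes sense before one knows
that `g` preserves `S`. -/
def InducesOnQuotient (g : V ≃ₗ[A] V) {R S : Submodule A V}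
    (e : Subquotient R S ≃ₗ[A] Subquotient R S) : Prop :=
  ∀ v w : S, (w : V) = g v → e (Submodule.Quotient.mk v) = Submodule.Quotient.mk w

lemma exists_inducesOnQuotient {g : V ≃ₗ[A] V} {R S : Submodule A V}
    (hS : S.map (g : V →ₗ[A] V) = S) (hR : R.map (g : V →ₗ[A] V) = R) :
    ∃ e : Subquotient R S ≃ₗ[A] Subquotient R S, InducesOnQuotient g e := by
  let gS : S ≃ₗ[A] S := g.ofSubmodules S S hS
  have hmap : (R.submoduleOf S).map (gS : S →ₗ[A] S) = R.submoduleOf S := by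
    apply Submodule.map_injective_of_injective S.subtype_injective
    have hcomm : S.subtype ∘ₗ (gS : S →ₗ[A] S) = (g : V →ₗ[A] V) ∘ₗ S.subtype := rfl
    rw [← Submodule.map_comp, hcomm, Submodule.map_comp, Submodule.submoduleOf,
      Submodule.map_comap_subtype, Submodule.map_inf _ g.injective, hS, hR]
  refine ⟨Submodule.Quotient.equiv _ _ gS hmap, fun v w hvw => ?_⟩
  have hw : gS v = w := Subtype.ext hvw.symm
  rw [← hw]
  rfl

lemma exists_linearEquiv_restrict_eq_and_quotient_eq [ComplementedLattice (Submodule A V)]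
    (N : Submodule A V) (a : N ≃ₗ[A] N) (e : (V ⧸ N) ≃ₗ[A] (V ⧸ N)) :
    ∃ k : V ≃ₗ[A] V, (∀ x : N, k x = a x) ∧
      ∀ x, (Submodule.Quotient.mk (k x) : V ⧸ N) = e (Submodule.Quotient.mk x) := by
  obtain ⟨C, hC⟩ := exists_isCompl N
  let p := N.prodEquivOfIsCompl C hC
  let q := N.quotientEquivOfIsCompl C hC
  let k := p.symm ≪≫ₗ a.prodCongr (q.symm ≪≫ₗ e ≪≫ₗ q) ≪≫ₗ p
  have hk : ∀ (n : N) (c : C), k (n + c) = a n + q (e (Submodule.Quotient.mk c)) := fun n c => by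
    have hp : p.symm (n + c) = (n, c) := p.symm_apply_eq.2 rfl
    simp [k, hp, p, q]
  refine ⟨k, fun x => by simpa using hk x 0, fun x => ?_⟩
  obtain ⟨⟨n, c⟩, rfl⟩ := p.surjective x
  have hn : ∀ n : N, (Submodule.Quotient.mk (n : V) : V ⧸ N) = 0 := fun n =>
    (Submodule.Quotient.mk_eq_zero N).2 n.2
  have hq : ∀ y, (Submodule.Quotient.mk (q y : V) : V ⧸ N) = y := q.symm_apply_apply
  rw [Submodule.coe_prodEquivOfIsCompl', hk, Submodule.Quotient.mk_add, Submodule.Quotient.mk_add,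
    hn, hn, hq, zero_add, zero_add]

lemma exists_linearEquiv_subquotient {R S : Submodule A V}
    [ComplementedLattice (Submodule A S)] (hRS : R ≤ S) (a : R ≃ₗ[A] R)
    (e : Subquotient R S ≃ₗ[A] Subquotient R S) :
    ∃ k : S ≃ₗ[A] S, (∀ x : R, (k (Submodule.inclusion hRS x) : V) = a x) ∧
      ∀ x, (Submodule.Quotient.mk (k x) : Subquotient R S) = e (Submodule.Quotient.mk x) := by
  let i : R.submoduleOf S ≃ₗ[A] R := Submodule.submoduleOfEquivOfLe hRS
  obtain ⟨k, hka, hke⟩ :=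
    exists_linearEquiv_restrict_eq_and_quotient_eq _ (i ≪≫ₗ a ≪≫ₗ i.symm) e
  refine ⟨k, fun x => ?_, hke⟩
  have hx := hka (i.symm x)
  simp only [LinearEquiv.trans_apply, i.apply_symm_apply] at hx
  exact congrArg Subtype.val hx

lemma exists_injective_sup_of_eq_on_inf {P Q : Submodule A V} (k : P ≃ₗ[A] P) (l : Q ≃ₗ[A] Q)
    (a : ↥(P ⊓ Q) ≃ₗ[A] ↥(P ⊓ Q))
    (hk : ∀ x, (k (Submodule.inclusion inf_le_left x) : V) = a x)
    (hl : ∀ x, (l (Submodule.inclusion inf_le_right x) : V) = a x) :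
    ∃ h : ↥(P ⊔ Q) →ₗ[A] V, Function.Injective h ∧
      (∀ x : P, h (Submodule.inclusion le_sup_left x) = k x) ∧
      ∀ y : Q, h (Submodule.inclusion le_sup_right y) = l y := by
  let φ : V →ₗ.[A] V := ⟨P, P.subtype ∘ₗ k⟩
  let ψ : V →ₗ.[A] V := ⟨Q, Q.subtype ∘ₗ l⟩
  have hagree : ∀ (x : P) (y : Q), (x : V) = y → (k x : V) = l y := by
    rintro ⟨x, hx⟩ ⟨_, hy⟩ rfl
    exact (hk ⟨x, hx, hy⟩).trans (hl ⟨x, hx, hy⟩).symm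
  let h : ↥(P ⊔ Q) →ₗ[A] V := (φ.sup ψ hagree).toFun
  have hh : ∀ (x : P) (y : Q) (z : ↥(P ⊔ Q)), (x : V) + y = z → h z = k x + l y :=
    LinearPMap.sup_apply (f := φ) (g := ψ) hagree
  refine ⟨h, (injective_iff_map_eq_zero h).2 fun z hz => ?_,
    fun x => by simpa using hh x 0 _ (by simp), fun y => by simpa using hh 0 y _ (by simp)⟩
  obtain ⟨x, hx, y, hy, hxy⟩ := Submodule.mem_sup.1 z.2
  lift x to P using hx
  lift y to Q using hy
  -- `k x = l (-y)` lies in `P ⊓ Q`, hence is a value `a r`; then `x = r = -y`.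
  have hkl : (k x : V) = l (-y) := by
    rw [map_neg, Submodule.coe_neg]
    exact eq_neg_of_add_eq_zero_left ((hh x y z hxy).symm.trans hz)
  obtain ⟨r, hr⟩ := a.surjective ⟨k x, (k x).2, hkl ▸ (l (-y)).2⟩
  have har : (a r : V) = k x := congrArg Subtype.val hr
  have hxr : Submodule.inclusion inf_le_left r = x := k.injective (Subtype.ext ((hk r).trans har))
  have hyr : Submodule.inclusion inf_le_right r = -y :=
    l.injective (Subtype.ext ((hl r).trans (har.trans hkl)))
  have hxy' : (x : V) = -y :=
    (congrArg Subtype.val hxr).symm.trans (congrArg Subtype.val hyr)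
  exact Subtype.ext (by rw [← hxy, hxy', neg_add_cancel, Submodule.coe_zero])

end Modules

section BilinForm

variable {A V : Type*} [CommRing A] [AddCommGroup V] [Module A V] {B : LinearMap.BilinForm A V}

/-- The radical `H ∩ H^⊥` of the restriction of `B` to `H`, as a submodule of the ambient module. -/
abbrev relRadical (B : LinearMap.BilinForm A V) (H : Submodule A V) : Submodule A V :=
  H ⊓ B.orthogonal H

/-- `e` is an isometry of the subquotient `S / R` for the form induced by `B`. The induced form is
evaluated on representatives, so that no proof of its well-definedness enters. -/
def IsQuotientIsometry (B : LinearMap.BilinForm A V) {R S : Submodule A V}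
    (e : Subquotient R S ≃ₗ[A] Subquotient R S) : Prop :=
  ∀ v w v' w' : S,
    e (Submodule.Quotient.mk v) = Submodule.Quotient.mk v' →
    e (Submodule.Quotient.mk w) = Submodule.Quotient.mk w' →
    B v' w' = B v w

lemma isRefl_of_forall_eq_mul {ε : A} (hε : ∀ v w, B v w = ε * B w v) : B.IsRefl :=
  fun v w hvw => by rw [hε, hvw, mul_zero]

lemma map_orthogonal_of_isOrthogonal {g : V ≃ₗ[A] V} (hg : B.IsOrthogonal g)
    (H : Submodule A V) :
    (B.orthogonal H).map (g : V →ₗ[A] V) = B.orthogonal (H.map (g : V →ₗ[A] V)) := by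
  ext v
  constructor
  · rintro ⟨u, hu, rfl⟩ _ ⟨w, hw, rfl⟩
    exact (hg w u).trans (hu w hw)
  · intro hv
    obtain ⟨u, rfl⟩ := g.surjective v
    exact ⟨u, fun w hw => (hg w u).symm.trans (hv _ (Submodule.mem_map_of_mem hw)), rfl⟩

lemma InducesOnQuotient.isQuotientIsometry (hrefl : B.IsRefl) {g : V ≃ₗ[A] V}
    (hg : B.IsOrthogonal g) {R S : Submodule A V} (hRS : R ≤ B.orthogonal S)
    (hS : S.map (g : V →ₗ[A] V) = S)
    {e : Subquotient R S ≃ₗ[A] Subquotient R S} (he : InducesOnQuotient g e) :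
    IsQuotientIsometry B e := by
  have hgS : ∀ v : S, g v ∈ S := fun v => hS.le (Submodule.mem_map_of_mem v.2)
  have hsub : ∀ v v' : S, e (Submodule.Quotient.mk v) = Submodule.Quotient.mk v' →
      g v - v' ∈ R := fun v v' hv => by
    rw [he v ⟨g v, hgS v⟩ rfl, Submodule.Quotient.eq] at hv
    exact hv
  intro v w v' w' hv hw
  have hleft : B (g v - v') w' = 0 := hrefl _ _ (hRS (hsub v v' hv) w' w'.2)
  have hright : B (g v) (g w - w') = 0 := hRS (hsub w w' hw) (g v) (hgS v)
  rw [map_sub, LinearMap.sub_apply, sub_eq_zero] at hleft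
  rw [map_sub, sub_eq_zero] at hright
  rw [← hleft, ← hright, hg]

lemma isometric_sup (hrefl : B.IsRefl) {P Q : Submodule A V} (hPQ : Q ≤ B.orthogonal P)
    {k : P →ₗ[A] P} {l : Q →ₗ[A] Q} (hk : ∀ x x', B (k x) (k x') = B x x')
    (hl : ∀ y y', B (l y) (l y') = B y y') {h : ↥(P ⊔ Q) →ₗ[A] V}
    (hhk : ∀ x : P, h (Submodule.inclusion le_sup_left x) = k x)
    (hhl : ∀ y : Q, h (Submodule.inclusion le_sup_right y) = l y) (z z' : ↥(P ⊔ Q)) :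
    B (h z) (h z') = B z z' := by
  have hdecomp : ∀ z : ↥(P ⊔ Q), ∃ (x : P) (y : Q),
      z = Submodule.inclusion le_sup_left x + Submodule.inclusion le_sup_right y := fun z => by
    obtain ⟨x, hx, y, hy, hxy⟩ := Submodule.mem_sup.1 z.2
    exact ⟨⟨x, hx⟩, ⟨y, hy⟩, Subtype.ext hxy.symm⟩
  have hxy : ∀ (x : P) (y : Q), B x y = 0 := fun x y => hPQ y.2 x x.2
  have hyx : ∀ (x : P) (y : Q), B y x = 0 := fun x y => hrefl _ _ (hxy x y)
  obtain ⟨x, y, rfl⟩ := hdecomp z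
  obtain ⟨x', y', rfl⟩ := hdecomp z'
  simp [hhk, hhl, hk, hl, hxy, hyx]

lemma exists_induced_automorphisms (hrefl : B.IsRefl) {g : V ≃ₗ[A] V} (hg : B.IsOrthogonal g)
    {H : Submodule A V} (hH : H.map (g : V →ₗ[A] V) = H) :
    (B.orthogonal H).map (g : V →ₗ[A] V) = B.orthogonal H ∧
    (relRadical B H).map (g : V →ₗ[A] V) = relRadical B H ∧
    ∃ (a : relRadical B H ≃ₗ[A] relRadical B H)
      (e : Subquotient (relRadical B H) H ≃ₗ[A] Subquotient (relRadical B H) H)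
      (f : Subquotient (relRadical B H) (B.orthogonal H) ≃ₗ[A]
        Subquotient (relRadical B H) (B.orthogonal H)),
      (∀ v, (a v : V) = g v) ∧ InducesOnQuotient g e ∧ InducesOnQuotient g f ∧
        IsQuotientIsometry B e ∧ IsQuotientIsometry B f := by
  have hP : (B.orthogonal H).map (g : V →ₗ[A] V) = B.orthogonal H := by
    rw [map_orthogonal_of_isOrthogonal hg, hH]
  have hR : (relRadical B H).map (g : V →ₗ[A] V) = relRadical B H := by
    rw [Submodule.map_inf _ g.injective, hH, hP]
  have hRP : relRadical B H ≤ B.orthogonal (B.orthogonal H) :=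
    inf_le_left.trans (LinearMap.BilinForm.le_orthogonal_orthogonal hrefl)
  obtain ⟨e, he⟩ := exists_inducesOnQuotient hH hR
  obtain ⟨f, hf⟩ := exists_inducesOnQuotient hP hR
  exact ⟨hP, hR, g.ofSubmodules _ _ hR, e, f, fun _ => rfl, he, hf,
    he.isQuotientIsometry hrefl hg inf_le_right hH, hf.isQuotientIsometry hrefl hg hRP hP⟩

end BilinForm

section Witt

variable {K V : Type*} [Field K] [AddCommGroup V] [Module K V] [FiniteDimensional K V]
  {B : LinearMap.BilinForm K V}

lemma exists_linearEquiv_extending_preserving_pairing (hB : B.Nondegenerate) {W : Submodule K V}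
    (hW : B.orthogonal W ≤ W) (hrefl : B.IsRefl) {h : W →ₗ[K] V} (hinj : Function.Injective h)
    (hiso : ∀ x y, B (h x) (h y) = B x y) :
    ∃ g : V ≃ₗ[K] V, (∀ x : W, g x = h x) ∧ ∀ (x : V) (y : W), B (g x) (g y) = B x y := by
  obtain ⟨s, hs⟩ := h.exists_leftInverse_of_injective (LinearMap.ker_eq_bot.2 hinj)
  obtain ⟨p, hp⟩ := W.subtype.exists_leftInverse_of_injective W.ker_subtype
  replace hs : ∀ y, s (h y) = y := LinearMap.congr_fun hs
  replace hp : ∀ y : W, p y = y := LinearMap.congr_fun hp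
  -- `k` has the right pairing with `h W`, but need not extend `h`; on `W` the difference `h - k`
  -- takes values orthogonal to `h W`.
  let k : V →ₗ[K] V := B.leftAdjointOfNondegenerate hB (W.subtype ∘ₗ s)
  have hk : ∀ (x : V) (y : W), B (k x) (h y) = B x y := fun x y => by
    rw [B.isAdjointPairLeftAdjointOfNondegenerate hB]
    simp [hs]
  let g : V →ₗ[K] V := k + (h - k ∘ₗ W.subtype) ∘ₗ p
  have hgW : ∀ x : W, g x = h x := fun x => by simp [g, hp]
  have hgB : ∀ (x : V) (y : W), B (g x) (g y) = B x y := fun x y => by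
    rw [hgW]
    simp [g, hk, hiso]
  have hginj : Function.Injective g := (injective_iff_map_eq_zero g).2 fun x hx => by
    have hxW : x ∈ W := hW fun w hw => hrefl _ _ <| by
      rw [← hgB x ⟨w, hw⟩, hx, map_zero, LinearMap.zero_apply]
    lift x to W using hxW
    rw [hgW] at hx
    rw [(injective_iff_map_eq_zero h).1 hinj x hx, Submodule.coe_zero]
  exact ⟨LinearEquiv.ofInjectiveEndo g hginj, hgW, hgB⟩

lemma exists_isOrthogonal_of_preserving_pairing (h2 : (2 : K) ≠ 0) (hB : B.Nondegenerate) {ε : K}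
    (hε : ∀ v w, B v w = ε * B w v) {W : Submodule K V} (hW : B.orthogonal W ≤ W) (g : V ≃ₗ[K] V)
    (hg : ∀ (x : V) (y : W), B (g x) (g y) = B x y) :
    ∃ g' : V ≃ₗ[K] V, B.IsOrthogonal g' ∧ ∀ x : W, g' x = g x := by
  have hrefl : B.IsRefl := isRefl_of_forall_eq_mul hε
  let D : LinearMap.BilinForm K V := B.compl₁₂ g g - B
  have hD : ∀ x y, D x y = B (g x) (g y) - B x y := fun _ _ => rfl
  have hDW : ∀ (x : V) (y : W), D x y = 0 := fun x y => by rw [hD, hg, sub_self]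
  have hDε : ∀ x y, D x y = ε * D y x := fun x y => by
    rw [hD, hD, hε x y, hε (g x), mul_sub]
  let T : LinearMap.BilinForm K V := (-(1 / 2 : K)) • D.compl₂ g.symm.toLinearMap
  let c : V →ₗ[K] V := T.symmCompOfNondegenerate B hB
  have hc : ∀ x y, B (c x) (g y) = -(1 / 2) * D x y := fun x y => by simp [c, T]
  have hc' : ∀ x y, B (g x) (c y) = -(1 / 2) * D x y := fun x y => by
    rw [hε, hc, hDε x y]; ring
  have hcW : ∀ x : W, c x = 0 := fun x => hB.1 _ fun w => by
    obtain ⟨y, rfl⟩ := g.surjective w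
    rw [hc, hDε, hDW, mul_zero, mul_zero]
  -- `c y ∈ (g W)^⊥ = g (W^⊥) ⊆ g W`, and `c x` is orthogonal to `g W`.
  have hcc : ∀ x y, B (c x) (c y) = 0 := fun x y => by
    obtain ⟨z, hz⟩ := g.surjective (c y)
    have hzW : z ∈ W := hW fun w hw => hrefl _ _ <| by
      rw [← hg z ⟨w, hw⟩, hz, hc, hDW y ⟨w, hw⟩, mul_zero]
    rw [← hz, hc, hDW x ⟨z, hzW⟩, mul_zero]
  have hiso : B.IsOrthogonal (g + c : V →ₗ[K] V) := fun v w => by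
    simp only [LinearMap.add_apply, LinearEquiv.coe_coe, map_add, hc, hc', hcc, hD]
    field_simp
    ring
  have hinj : Function.Injective (g + c : V →ₗ[K] V) :=
    (injective_iff_map_eq_zero _).2 fun x hx => hB.1 x fun w => by
      rw [← hiso, hx, map_zero, LinearMap.zero_apply]
  refine ⟨LinearEquiv.ofInjectiveEndo _ hinj, hiso, fun x => ?_⟩
  simp [hcW]

/-- Witt's extension theorem for coisotropic subspaces. -/
lemma exists_isOrthogonal_extending_of_orthogonal_le (h2 : (2 : K) ≠ 0) (hB : B.Nondegenerate)
    {ε : K} (hε : ∀ v w, B v w = ε * B w v) {W : Submodule K V} (hW : B.orthogonal W ≤ W)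
    {h : W →ₗ[K] V} (hinj : Function.Injective h) (hiso : ∀ x y, B (h x) (h y) = B x y) :
    ∃ g : V ≃ₗ[K] V, B.IsOrthogonal g ∧ ∀ x : W, g x = h x := by
  obtain ⟨g, hgh, hg⟩ := exists_linearEquiv_extending_preserving_pairing hB hW
    (isRefl_of_forall_eq_mul hε) hinj hiso
  obtain ⟨g', hg', hgg'⟩ := exists_isOrthogonal_of_preserving_pairing h2 hB hε hW g hg
  exact ⟨g', hg', fun x => (hgg' x).trans (hgh x)⟩

lemma exists_isOrthogonal_inducing (h2 : (2 : K) ≠ 0) (hB : B.Nondegenerate) {ε : K}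
    (hε : ∀ v w, B v w = ε * B w v) {H : Submodule K V}
    (a : relRadical B H ≃ₗ[K] relRadical B H)
    {e : Subquotient (relRadical B H) H ≃ₗ[K] Subquotient (relRadical B H) H}
    {f : Subquotient (relRadical B H) (B.orthogonal H) ≃ₗ[K]
      Subquotient (relRadical B H) (B.orthogonal H)}
    (he : IsQuotientIsometry B e) (hf : IsQuotientIsometry B f) :
    ∃ g : V ≃ₗ[K] V, B.IsOrthogonal g ∧ H.map (g : V →ₗ[K] V) = H ∧
      (∀ v, (a v : V) = g v) ∧ InducesOnQuotient g e ∧ InducesOnQuotient g f := by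
  obtain ⟨k, hka, hke⟩ := exists_linearEquiv_subquotient inf_le_left a e
  obtain ⟨l, hla, hlf⟩ := exists_linearEquiv_subquotient inf_le_right a f
  obtain ⟨h, hinj, hhk, hhl⟩ := exists_injective_sup_of_eq_on_inf k l a hka hla
  have hiso : ∀ z z', B (h z) (h z') = B z z' :=
    isometric_sup (isRefl_of_forall_eq_mul hε) le_rfl (k := k.toLinearMap) (l := l.toLinearMap)
      (fun x x' => he x x' _ _ (hke x).symm (hke x').symm)
      (fun y y' => hf y y' _ _ (hlf y).symm (hlf y').symm) hhk hhl
  have hcoiso : B.orthogonal (H ⊔ B.orthogonal H) ≤ H ⊔ B.orthogonal H :=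
    (LinearMap.BilinForm.orthogonal_le le_sup_left).trans le_sup_right
  obtain ⟨g, hg, hgh⟩ :=
    exists_isOrthogonal_extending_of_orthogonal_le h2 hB hε hcoiso hinj hiso
  have hgk : ∀ x : H, g x = k x := fun x => (hgh _).trans (hhk x)
  have hgl : ∀ y : B.orthogonal H, g y = l y := fun y => (hgh _).trans (hhl y)
  refine ⟨g, hg, Submodule.eq_of_le_of_finrank_eq ?_ (g.finrank_map_eq H), fun v => ?_,
    fun v w hw => ?_, fun v w hw => ?_⟩
  · rintro _ ⟨x, hx, rfl⟩
    exact (hgk ⟨x, hx⟩).symm ▸ (k ⟨x, hx⟩).2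
  · exact (hka v).symm.trans (hgk _).symm
  · rw [← hke, Subtype.ext (hw.trans (hgk v))]
  · rw [← hlf, Subtype.ext (hw.trans (hgl v))]

theorem stmt_9_general (h2 : (2 : K) ≠ 0) (hB : B.Nondegenerate) {ε : K}
    (hε : ∀ v w, B v w = ε * B w v) (H : Submodule K V) :
    (∀ g : V ≃ₗ[K] V, B.IsOrthogonal g → H.map (g : V →ₗ[K] V) = H →
      (B.orthogonal H).map (g : V →ₗ[K] V) = B.orthogonal H ∧
      (relRadical B H).map (g : V →ₗ[K] V) = relRadical B H ∧
      ∃ (a : relRadical B H ≃ₗ[K] relRadical B H)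
        (e : Subquotient (relRadical B H) H ≃ₗ[K] Subquotient (relRadical B H) H)
        (f : Subquotient (relRadical B H) (B.orthogonal H) ≃ₗ[K]
          Subquotient (relRadical B H) (B.orthogonal H)),
        (∀ v, (a v : V) = g v) ∧ InducesOnQuotient g e ∧ InducesOnQuotient g f ∧
          IsQuotientIsometry B e ∧ IsQuotientIsometry B f) ∧
    ∀ (a : relRadical B H ≃ₗ[K] relRadical B H)
      (e : Subquotient (relRadical B H) H ≃ₗ[K] Subquotient (relRadical B H) H)
      (f : Subquotient (relRadical B H) (B.orthogonal H) ≃ₗ[K]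
        Subquotient (relRadical B H) (B.orthogonal H)),
      IsQuotientIsometry B e → IsQuotientIsometry B f →
      ∃ g : V ≃ₗ[K] V, B.IsOrthogonal g ∧ H.map (g : V →ₗ[K] V) = H ∧
        (∀ v, (a v : V) = g v) ∧ InducesOnQuotient g e ∧ InducesOnQuotient g f :=
  ⟨fun _ hg hgH => exists_induced_automorphisms (isRefl_of_forall_eq_mul hε) hg hgH,
    fun a _ _ he hf => exists_isOrthogonal_inducing h2 hB hε a he hf⟩

end Witt

lemma bperp_eq_orthogonal {V : Type*} [AddCommGroup V] [Module ℂ V]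
    {B : LinearMap.BilinForm ℂ V} (hrefl : B.IsRefl) (H : Submodule ℂ V) :
    bperp B H = B.orthogonal H :=
  Submodule.ext fun _ => ⟨fun hv w hw => hrefl _ _ (hv w hw), fun hv w hw => hrefl _ _ (hv w hw)⟩

/-- Lemma 3.3 (`lem:v4-stab`), structural form.  Let `R = H ∩ H^⊥`.  Every isometry `g` of
`V` with `g(H) = H` also satisfies `g(H^⊥) = H^⊥` and `g(R) = R`, and induces automorphisms
of `R`, of `H/R`, and of `H^⊥/R`, the latter two being isometries of the induced forms
(expressed here via representatives).  Conversely, every triple consisting of an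
automorphism of `R`, an isometry of `H/R` and an isometry of `H^⊥/R` is induced by some
isometry of `V` preserving `H`. -/
theorem stmt_9 {V : Type*} [AddCommGroup V] [Module ℂ V] [FiniteDimensional ℂ V]
    (B : V →ₗ[ℂ] V →ₗ[ℂ] ℂ)
    (hB : ∀ v, (∀ w, B v w = 0) → v = 0)
    (hrefl : (∀ v w, B v w = B w v) ∨ (∀ v w, B v w = - B w v))
    (H : Submodule ℂ V)
    (R : Submodule ℂ V) (hR : R = H ⊓ bperp B H)
    (RH : Submodule ℂ ↥H) (hRH : RH = Submodule.comap H.subtype R)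
    (RP : Submodule ℂ ↥(bperp B H)) (hRP : RP = Submodule.comap (bperp B H).subtype R) :
    (∀ g : V ≃ₗ[ℂ] V, (∀ v w, B (g v) (g w) = B v w) →
      Submodule.map (g : V →ₗ[ℂ] V) H = H →
      (Submodule.map (g : V →ₗ[ℂ] V) (bperp B H) = bperp B H ∧
       Submodule.map (g : V →ₗ[ℂ] V) R = R ∧
       ∃ (a : ↥R ≃ₗ[ℂ] ↥R) (e : (↥H ⧸ RH) ≃ₗ[ℂ] (↥H ⧸ RH))
         (f : (↥(bperp B H) ⧸ RP) ≃ₗ[ℂ] (↥(bperp B H) ⧸ RP)),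
         (∀ v : ↥R, (a v : V) = g (v : V)) ∧
         (∀ v w : ↥H, (w : V) = g (v : V) →
            e (Submodule.Quotient.mk v) = Submodule.Quotient.mk w) ∧
         (∀ v w : ↥(bperp B H), (w : V) = g (v : V) →
            f (Submodule.Quotient.mk v) = Submodule.Quotient.mk w) ∧
         (∀ v w v' w' : ↥H,
            e (Submodule.Quotient.mk v) = Submodule.Quotient.mk v' →
            e (Submodule.Quotient.mk w) = Submodule.Quotient.mk w' →
            B (v' : V) (w' : V) = B (v : V) (w : V)) ∧
         (∀ v w v' w' : ↥(bperp B H),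
            f (Submodule.Quotient.mk v) = Submodule.Quotient.mk v' →
            f (Submodule.Quotient.mk w) = Submodule.Quotient.mk w' →
            B (v' : V) (w' : V) = B (v : V) (w : V)))) ∧
    (∀ (a : ↥R ≃ₗ[ℂ] ↥R) (e : (↥H ⧸ RH) ≃ₗ[ℂ] (↥H ⧸ RH))
       (f : (↥(bperp B H) ⧸ RP) ≃ₗ[ℂ] (↥(bperp B H) ⧸ RP)),
       (∀ v w v' w' : ↥H,
          e (Submodule.Quotient.mk v) = Submodule.Quotient.mk v' →
          e (Submodule.Quotient.mk w) = Submodule.Quotient.mk w' →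
          B (v' : V) (w' : V) = B (v : V) (w : V)) →
       (∀ v w v' w' : ↥(bperp B H),
          f (Submodule.Quotient.mk v) = Submodule.Quotient.mk v' →
          f (Submodule.Quotient.mk w) = Submodule.Quotient.mk w' →
          B (v' : V) (w' : V) = B (v : V) (w : V)) →
       ∃ g : V ≃ₗ[ℂ] V, (∀ v w, B (g v) (g w) = B v w) ∧
         Submodule.map (g : V →ₗ[ℂ] V) H = H ∧
         (∀ v : ↥R, (a v : V) = g (v : V)) ∧
         (∀ v w : ↥H, (w : V) = g (v : V) →
            e (Submodule.Quotient.mk v) = Submodule.Quotient.mk w) ∧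
         (∀ v w : ↥(bperp B H), (w : V) = g (v : V) →
            f (Submodule.Quotient.mk v) = Submodule.Quotient.mk w)) := by
  obtain ⟨ε, hε⟩ : ∃ ε : ℂ, ∀ v w, B v w = ε * B w v :=
    hrefl.elim (fun h => ⟨1, by simpa using h⟩) (fun h => ⟨-1, by simpa using h⟩)
  have hBrefl : LinearMap.IsRefl B := isRefl_of_forall_eq_mul hε
  have hBnondeg : B.Nondegenerate := hBrefl.nondegenerate_iff_separatingLeft.2 hB
  subst hR hRH hRP
  rw [bperp_eq_orthogonal hBrefl]
  exact stmt_9_general two_ne_zero hBnondeg hε H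
end

section
/- Let H, H' ⊆ B be subspaces. Then there exists g ∈ Q_B with g(H) = H' if and only if for every i with 1 ≤ i ≤ m there exists an isometry h_i of (B_i, ⟨−,−⟩_{B_i}) with det h_i = 1 and h_i(pr_i H) = pr_i H'. -/
/-!
Only the graded pieces of a subspace matter: if `H ≤ H'` and `pr_i H' ≤ pr_i H` for all `i`, then
`H = H'`, because the last nonzero coordinate of a vector of `H'` can be cleared by a vector of `H`.
A block triangular map `g` with invertible diagonal blocks `d i` satisfies
`pr_i (g H) = d i (pr_i H)`, which is one implication. For the other, suppose
`d i (pr_i H) = pr_i H'` and choose linear maps `B_i → B_{≤ i}` lifting the identity and sending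
`pr_i H'` into `H'`. Precomposed with the `d i`, they are the columns of a block triangular map `S`
with diagonal `d` that sends `∏ pr_i H` into `H'`, hence onto `H'`. The same construction with
`H' = H` and `d = 1` gives a unipotent `T` sending `∏ pr_i H` onto `H`, and `S ∘ T⁻¹` is a block
triangular map with diagonal `d` sending `H` to `H'`. Thus the diagonal blocks can be prescribed at
will, and the bilinear forms play a role only in saying which blocks are allowed.
-/

open Module

/-- `B_{≤ i} = B₁ ⊕ ⋯ ⊕ B_i`, as a subspace of `B = B₁ ⊕ ⋯ ⊕ B_m` (modelled as the
product `∀ j, Bi j`): the vectors whose coordinates vanish beyond `i`. -/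
def Ble {m : ℕ} (Bi : Fin m → Type*) [∀ i, AddCommGroup (Bi i)] [∀ i, Module ℂ (Bi i)]
    (i : Fin m) : Submodule ℂ (∀ j, Bi j) :=
  Submodule.pi (Set.Ioi i) (fun j => (⊥ : Submodule ℂ (Bi j)))

/-- `B_{< i} = B₁ ⊕ ⋯ ⊕ B_{i-1}`, as a subspace of `B = B₁ ⊕ ⋯ ⊕ B_m`: the vectors whose
coordinates vanish from `i` on. -/
def Blt {m : ℕ} (Bi : Fin m → Type*) [∀ i, AddCommGroup (Bi i)] [∀ i, Module ℂ (Bi i)]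
    (i : Fin m) : Submodule ℂ (∀ j, Bi j) :=
  Submodule.pi (Set.Ici i) (fun j => (⊥ : Submodule ℂ (Bi j)))

/-- `pr_i H ⊆ B_i`: the image of `H ∩ B_{≤ i}` under the projection `B_{≤ i} → B_i`
with kernel `B_{< i}` (in the product model, the `i`-th coordinate projection). -/
def prI {m : ℕ} (Bi : Fin m → Type*) [∀ i, AddCommGroup (Bi i)] [∀ i, Module ℂ (Bi i)]
    (i : Fin m) (H : Submodule ℂ (∀ j, Bi j)) : Submodule ℂ (Bi i) :=
  Submodule.map (LinearMap.proj i : (∀ j, Bi j) →ₗ[ℂ] Bi i) (H ⊓ Ble Bi i)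

/-- Membership in the group `Q_B`: a linear endomorphism `g` of `B = B₁ ⊕ ⋯ ⊕ B_m` lies in
`Q_B` if it is a linear automorphism and, for each `i`, there is an isometry `gi` of
`(B_i, ⟨-,-⟩_{B_i})` with `det gi = 1` such that `g v - gi v ∈ B_{< i}` for all `v ∈ B_i`. -/
def memQB {m : ℕ} (Bi : Fin m → Type*) [∀ i, AddCommGroup (Bi i)] [∀ i, Module ℂ (Bi i)]
    (βi : ∀ i, Bi i →ₗ[ℂ] Bi i →ₗ[ℂ] ℂ)
    (g : (∀ j, Bi j) →ₗ[ℂ] (∀ j, Bi j)) : Prop :=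
  Function.Bijective g ∧
  ∀ i, ∃ gi : Bi i ≃ₗ[ℂ] Bi i,
    (∀ x y, βi i (gi x) (gi y) = βi i x y) ∧
    LinearMap.det (gi : Bi i →ₗ[ℂ] Bi i) = 1 ∧
    ∀ v : ∀ j, Bi j, (∀ j, j ≠ i → v j = 0) →
      g v - Pi.single i (gi (v i)) ∈ Blt Bi i

section GeneralLinearAlgebra

variable {K E F : Type*} [DivisionRing K] [AddCommGroup E] [Module K E] [AddCommGroup F]
  [Module K F]

lemma exists_rightInverse_map_map_le {f : E →ₗ[K] F} (hf : Function.Surjective f)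
    (p : Submodule K E) : ∃ s : F →ₗ[K] E, f ∘ₗ s = LinearMap.id ∧ (p.map f).map s ≤ p := by
  obtain ⟨s₀, hs₀⟩ := f.exists_rightInverse_of_surjective (LinearMap.range_eq_top.2 hf)
  obtain ⟨s₁, hs₁⟩ := (f.submoduleMap p).exists_rightInverse_of_surjective
    (LinearMap.range_eq_top.2 (f.submoduleMap_surjective p))
  obtain ⟨s₂, hs₂⟩ := (p.subtype ∘ₗ s₁).exists_extend
  have s₂_apply (y : p.map f) : s₂ y = s₁ y := LinearMap.congr_fun hs₂ y
  have f_s₂_apply (y : p.map f) : f (s₂ y) = y := by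
    rw [s₂_apply]
    exact congrArg Subtype.val (LinearMap.congr_fun hs₁ y)
  -- `s₂` is the desired section over `p.map f`; the second summand corrects it elsewhere.
  refine ⟨s₂ + s₀ ∘ₗ (LinearMap.id - f ∘ₗ s₂), ?_, ?_⟩
  · rw [LinearMap.comp_add, ← LinearMap.comp_assoc, hs₀, LinearMap.id_comp, add_sub_cancel]
  · rintro _ ⟨y, hy, rfl⟩
    have hy_mem : s₂ y ∈ p := s₂_apply ⟨y, hy⟩ ▸ (s₁ ⟨y, hy⟩).2
    simpa [f_s₂_apply ⟨y, hy⟩] using hy_mem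

end GeneralLinearAlgebra

section Filtration

variable {ι R : Type*} [LinearOrder ι] [Ring R] {V W U : ι → Type*}
  [∀ i, AddCommGroup (V i)] [∀ i, Module R (V i)]
  [∀ i, AddCommGroup (W i)] [∀ i, Module R (W i)]
  [∀ i, AddCommGroup (U i)] [∀ i, Module R (U i)]

variable (R V) in
/-- The step `V_{≤ i}` of the coordinate filtration of `∏ j, V j`: the vectors whose coordinates
vanish beyond `i`. It is `Ble` over any ring and any linearly ordered index type. -/
def filtrationLE (i : ι) : Submodule R (∀ j, V j) :=
  Submodule.pi (Set.Ioi i) fun _ => ⊥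

/-- The `i`-th graded piece of the filtration induced on a submodule `H` of `∏ j, V j`, as a
submodule of `V i`. It is `prI` over any ring and any linearly ordered index type. -/
def gradedPiece (i : ι) (H : Submodule R (∀ j, V j)) : Submodule R (V i) :=
  (H ⊓ filtrationLE R V i).map (LinearMap.proj i)

/-- `g` is block upper triangular with diagonal blocks `d i`: it maps `V_{≤ i}` to `W_{≤ i}` and
induces `d i` on the quotients by `V_{< i}` and `W_{< i}`, which are identified with `V i` and
`W i` by the `i`-th coordinate. -/
def IsBlockTriangular (g : (∀ j, V j) →ₗ[R] ∀ j, W j) (d : ∀ i, V i →ₗ[R] W i) : Prop :=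
  ∀ i, ∀ v ∈ filtrationLE R V i, g v ∈ filtrationLE R W i ∧ g v i = d i (v i)

lemma mem_filtrationLE {i : ι} {v : ∀ j, V j} :
    v ∈ filtrationLE R V i ↔ ∀ j, i < j → v j = 0 := by
  simp [filtrationLE, Submodule.mem_pi]

lemma filtrationLE_mono : Monotone (filtrationLE R V) := fun _ _ hij _ hv =>
  mem_filtrationLE.2 fun k hk => mem_filtrationLE.1 hv k (hij.trans_lt hk)

lemma single_mem_filtrationLE (i : ι) (x : V i) : Pi.single i x ∈ filtrationLE R V i :=
  mem_filtrationLE.2 fun _ hj => Pi.single_eq_of_ne hj.ne' x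

lemma mem_gradedPiece {i : ι} {H : Submodule R (∀ j, V j)} {x : V i} :
    x ∈ gradedPiece i H ↔ ∃ v ∈ H, v ∈ filtrationLE R V i ∧ v i = x := by
  simp [gradedPiece, and_assoc]

lemma le_gradedPiece_pi (P : ∀ i, Submodule R (V i)) (i : ι) :
    P i ≤ gradedPiece i (Submodule.pi Set.univ P) := fun x hx =>
  mem_gradedPiece.2 ⟨Pi.single i x, Submodule.le_comap_single_pi P hx,
    single_mem_filtrationLE i x, Pi.single_eq_same i x⟩

lemma exists_ge_ne_zero_and_mem_filtrationLE [Finite ι] {v : ∀ j, V j} {k : ι} (hk : v k ≠ 0) :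
    ∃ j, k ≤ j ∧ v j ≠ 0 ∧ v ∈ filtrationLE R V j := by
  obtain ⟨j, hkj, hj⟩ := (Set.toFinite {j | v j ≠ 0}).exists_le_maximal hk
  exact ⟨j, hkj, hj.prop, mem_filtrationLE.2 fun l hl => not_not.1 (hj.not_prop_of_gt hl)⟩

theorem eq_of_le_of_gradedPiece_le [Finite ι] {H H' : Submodule R (∀ j, V j)} (hle : H ≤ H')
    (hgr : ∀ i, gradedPiece i H' ≤ gradedPiece i H) : H = H' := by
  have inf_filtrationLE_le (i : ι) : H' ⊓ filtrationLE R V i ≤ H := by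
    induction i using WellFoundedLT.induction with | ind i ih =>
    rintro w ⟨hw, hwi⟩
    obtain ⟨u, hu, hui, huw⟩ := mem_gradedPiece.1 (hgr i (mem_gradedPiece.2 ⟨w, hw, hwi, rfl⟩))
    suffices w - u ∈ H by simpa using add_mem this hu
    by_contra hne
    have hsub : w - u ≠ 0 := fun h => hne (h ▸ H.zero_mem)
    obtain ⟨k, hk⟩ := Function.ne_iff.1 hsub
    obtain ⟨j, -, hj, hsubj⟩ := exists_ge_ne_zero_and_mem_filtrationLE (R := R) hk
    have hji : j < i := by
      refine lt_of_not_ge fun hij => hj ?_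
      rcases hij.eq_or_lt with rfl | hij
      · exact sub_eq_zero.2 huw.symm
      · exact mem_filtrationLE.1 (sub_mem hwi hui) j hij
    exact hne (ih j hji ⟨sub_mem hw (hle hu), hsubj⟩)
  refine le_antisymm hle fun w hw => ?_
  by_cases h0 : w = 0
  · exact h0 ▸ H.zero_mem
  · obtain ⟨k, hk⟩ := Function.ne_iff.1 h0
    obtain ⟨j, -, -, hwj⟩ := exists_ge_ne_zero_and_mem_filtrationLE (R := R) hk
    exact inf_filtrationLE_le j ⟨hw, hwj⟩

lemma isBlockTriangular_iff_single [Finite ι] {g : (∀ j, V j) →ₗ[R] ∀ j, W j}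
    {d : ∀ i, V i →ₗ[R] W i} :
    IsBlockTriangular g d ↔
      ∀ i x, g (Pi.single i x) ∈ filtrationLE R W i ∧ g (Pi.single i x) i = d i x := by
  refine ⟨fun hg i x => by simpa using hg i _ (single_mem_filtrationLE i x), fun hg i v hv => ?_⟩
  cases nonempty_fintype ι
  have hgv : g v = ∑ j, g (Pi.single j (v j)) := by
    rw [← map_sum, Finset.univ_sum_single]
  have column_eq_zero {j : ι} (hj : i < j) : g (Pi.single j (v j)) = 0 := by
    rw [mem_filtrationLE.1 hv j hj, Pi.single_zero, map_zero]
  constructor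
  · rw [hgv]
    refine sum_mem fun j _ => ?_
    rcases le_or_gt j i with hj | hj
    · exact filtrationLE_mono hj (hg j (v j)).1
    · exact column_eq_zero hj ▸ zero_mem _
  · rw [hgv, Finset.sum_apply, Fintype.sum_eq_single i, (hg i (v i)).2]
    intro j hj
    rcases hj.lt_or_gt with hj | hj
    · exact mem_filtrationLE.1 (hg j (v j)).1 i hj
    · rw [column_eq_zero hj, Pi.zero_apply]

namespace IsBlockTriangular

variable {g : (∀ j, V j) →ₗ[R] ∀ j, W j} {d : ∀ i, V i →ₗ[R] W i}

lemma comp {g' : (∀ j, W j) →ₗ[R] ∀ j, U j} {d' : ∀ i, W i →ₗ[R] U i}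
    (hg' : IsBlockTriangular g' d') (hg : IsBlockTriangular g d) :
    IsBlockTriangular (g' ∘ₗ g) fun i => d' i ∘ₗ d i := fun i v hv => by
  obtain ⟨hgv, hgvi⟩ := hg i v hv
  obtain ⟨hgv', hgvi'⟩ := hg' i _ hgv
  exact ⟨hgv', hgvi'.trans (congrArg (d' i) hgvi)⟩

lemma map_gradedPiece_le (hg : IsBlockTriangular g d) (H : Submodule R (∀ j, V j)) (i : ι) :
    (gradedPiece i H).map (d i) ≤ gradedPiece i (H.map g) := by
  rintro _ ⟨x, hx, rfl⟩
  obtain ⟨v, hv, hvi, rfl⟩ := mem_gradedPiece.1 hx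
  exact mem_gradedPiece.2 ⟨g v, ⟨v, hv, rfl⟩, hg i v hvi⟩

variable [Finite ι]

lemma surjective (hg : IsBlockTriangular g d) (hd : ∀ i, Function.Surjective (d i)) :
    Function.Surjective g := by
  rw [← LinearMap.range_eq_top, LinearMap.range_eq_map]
  refine eq_of_le_of_gradedPiece_le le_top fun i => le_top.trans ?_
  calc (⊤ : Submodule R (W i))
      = (⊤ : Submodule R (V i)).map (d i) := by
        rw [Submodule.map_top, LinearMap.range_eq_top.2 (hd i)]
    _ ≤ (gradedPiece i (⊤ : Submodule R (∀ j, V j))).map (d i) := by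
        refine Submodule.map_mono ?_
        simpa using le_gradedPiece_pi (fun j => (⊤ : Submodule R (V j))) i
    _ ≤ gradedPiece i ((⊤ : Submodule R (∀ j, V j)).map g) := hg.map_gradedPiece_le ⊤ i

lemma injective (hg : IsBlockTriangular g d) (hd : ∀ i, Function.Injective (d i)) :
    Function.Injective g := by
  rw [← LinearMap.ker_eq_bot]
  refine (eq_of_le_of_gradedPiece_le bot_le fun i x hx => ?_).symm
  obtain ⟨v, hv, hvi, rfl⟩ := mem_gradedPiece.1 hx
  have hdv : d i (v i) = 0 := by rw [← (hg i v hvi).2, LinearMap.mem_ker.1 hv, Pi.zero_apply]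
  rw [(map_eq_zero_iff _ (hd i)).1 hdv]
  exact zero_mem _

lemma mem_filtrationLE_of_apply_mem (hg : IsBlockTriangular g d)
    (hd : ∀ i, Function.Injective (d i)) {i : ι} {v : ∀ j, V j}
    (hv : g v ∈ filtrationLE R W i) : v ∈ filtrationLE R V i := by
  refine mem_filtrationLE.2 fun k hk => by_contra fun hvk => ?_
  obtain ⟨j, hkj, hj, hvj⟩ := exists_ge_ne_zero_and_mem_filtrationLE (R := R) hvk
  have hdv : d j (v j) = 0 := by
    rw [← (hg j v hvj).2, mem_filtrationLE.1 hv j (hk.trans_le hkj)]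
  exact hj ((map_eq_zero_iff _ (hd j)).1 hdv)

lemma map_gradedPiece (hg : IsBlockTriangular g d) (hd : ∀ i, Function.Injective (d i))
    (H : Submodule R (∀ j, V j)) (i : ι) :
    (gradedPiece i H).map (d i) = gradedPiece i (H.map g) := by
  refine le_antisymm (hg.map_gradedPiece_le H i) fun y hy => ?_
  obtain ⟨_, ⟨v, hv, rfl⟩, hgv, rfl⟩ := mem_gradedPiece.1 hy
  have hvi := hg.mem_filtrationLE_of_apply_mem hd hgv
  exact ⟨v i, mem_gradedPiece.2 ⟨v, hv, hvi, rfl⟩, (hg i v hvi).2.symm⟩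

lemma symm {e : (∀ j, V j) ≃ₗ[R] ∀ j, W j} {d : ∀ i, V i ≃ₗ[R] W i}
    (he : IsBlockTriangular e.toLinearMap fun i => (d i).toLinearMap) :
    IsBlockTriangular e.symm.toLinearMap fun i => (d i).symm.toLinearMap := fun i w hw => by
  have hmem : e.symm w ∈ filtrationLE R V i :=
    he.mem_filtrationLE_of_apply_mem (fun i => (d i).injective) (by simpa using hw)
  refine ⟨hmem, (d i).eq_symm_apply.2 ?_⟩
  simpa using (he i _ hmem).2.symm

end IsBlockTriangular

end Filtration

section Orbits

variable {ι K : Type*} [LinearOrder ι] [DivisionRing K] {V W : ι → Type*}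
  [∀ i, AddCommGroup (V i)] [∀ i, Module K (V i)] [∀ i, AddCommGroup (W i)] [∀ i, Module K (W i)]

lemma exists_lift_gradedPiece (H : Submodule K (∀ j, V j)) (i : ι) :
    ∃ t : V i →ₗ[K] ∀ j, V j, (∀ x, t x ∈ filtrationLE K V i ∧ t x i = x) ∧
      (gradedPiece i H).map t ≤ H := by
  let F := filtrationLE K V i
  let f : F →ₗ[K] V i := LinearMap.proj i ∘ₗ F.subtype
  have hf : Function.Surjective f := fun x =>
    ⟨⟨Pi.single i x, single_mem_filtrationLE i x⟩, Pi.single_eq_same i x⟩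
  obtain ⟨s, hfs, hs⟩ := exists_rightInverse_map_map_le hf (H.comap F.subtype)
  refine ⟨F.subtype ∘ₗ s, fun x => ⟨(s x).2, LinearMap.congr_fun hfs x⟩, ?_⟩
  rintro _ ⟨x, hx, rfl⟩
  obtain ⟨v, hv, hvi, rfl⟩ := mem_gradedPiece.1 hx
  exact hs ⟨v i, ⟨⟨v, hvi⟩, hv, rfl⟩, rfl⟩

variable [Finite ι]

lemma exists_isBlockTriangular_map_pi_eq (d : ∀ i, V i →ₗ[K] W i) (P : ∀ i, Submodule K (V i))
    (H : Submodule K (∀ j, W j)) (hP : ∀ i, (P i).map (d i) = gradedPiece i H) :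
    ∃ g : (∀ j, V j) →ₗ[K] ∀ j, W j,
      IsBlockTriangular g d ∧ (Submodule.pi Set.univ P).map g = H := by
  cases nonempty_fintype ι
  choose t ht htH using exists_lift_gradedPiece H
  let g : (∀ j, V j) →ₗ[K] ∀ j, W j := LinearMap.lsum K V ℕ fun i => t i ∘ₗ d i
  have hg : IsBlockTriangular g d := isBlockTriangular_iff_single.2 fun i x => by
    simpa only [g, LinearMap.lsum_piSingle, LinearMap.comp_apply] using ht i (d i x)
  refine ⟨g, hg, eq_of_le_of_gradedPiece_le ?_ fun i => ?_⟩
  · rintro _ ⟨v, hv, rfl⟩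
    have hgv : g v = ∑ i, t i (d i (v i)) := by simp [g, LinearMap.lsum_apply]
    rw [hgv]
    exact sum_mem fun i _ =>
      htH i (Submodule.mem_map_of_mem (hP i ▸ Submodule.mem_map_of_mem (hv i trivial)))
  · rw [← hP i]
    exact (Submodule.map_mono (le_gradedPiece_pi P i)).trans (hg.map_gradedPiece_le _ i)

theorem exists_isBlockTriangular_map_eq_iff (d : ∀ i, V i ≃ₗ[K] W i)
    (H : Submodule K (∀ j, V j)) (H' : Submodule K (∀ j, W j)) :
    (∃ g : (∀ j, V j) →ₗ[K] ∀ j, W j,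
      IsBlockTriangular g (fun i => (d i).toLinearMap) ∧ H.map g = H') ↔
      ∀ i, (gradedPiece i H).map (d i).toLinearMap = gradedPiece i H' := by
  constructor
  · rintro ⟨g, hg, rfl⟩ i
    exact hg.map_gradedPiece (fun i => (d i).injective) H i
  · intro hgr
    obtain ⟨S, hS, hSH'⟩ := exists_isBlockTriangular_map_pi_eq _ _ H' hgr
    obtain ⟨T, hT, hTH⟩ := exists_isBlockTriangular_map_pi_eq
      (fun i => (LinearEquiv.refl K (V i)).toLinearMap) (fun i => gradedPiece i H) H
      fun i => Submodule.map_id _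
    let e := LinearEquiv.ofBijective T
      ⟨hT.injective fun _ => Function.injective_id, hT.surjective fun _ => Function.surjective_id⟩
    have he : IsBlockTriangular e.toLinearMap fun i => (LinearEquiv.refl K (V i)).toLinearMap := hT
    have map_symm : H.map e.symm.toLinearMap = Submodule.pi Set.univ fun i => gradedPiece i H :=
      (Submodule.map_symm_eq_iff e).2 hTH
    exact ⟨S ∘ₗ e.symm.toLinearMap, hS.comp he.symm, by rw [Submodule.map_comp, map_symm, hSH']⟩

theorem stmt_11_general (G : ∀ i, Set (V i ≃ₗ[K] W i))
    (H : Submodule K (∀ j, V j)) (H' : Submodule K (∀ j, W j)) :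
    (∃ g : (∀ j, V j) →ₗ[K] ∀ j, W j, (∃ d : ∀ i, V i ≃ₗ[K] W i, (∀ i, d i ∈ G i) ∧
      IsBlockTriangular g fun i => (d i).toLinearMap) ∧ H.map g = H') ↔
      ∀ i, ∃ h ∈ G i, (gradedPiece i H).map h.toLinearMap = gradedPiece i H' := by
  constructor
  · rintro ⟨g, ⟨d, hdG, hg⟩, hgH⟩ i
    exact ⟨d i, hdG i, (exists_isBlockTriangular_map_eq_iff d H H').1 ⟨g, hg, hgH⟩ i⟩
  · intro h
    choose d hdG hd using h
    obtain ⟨g, hg, hgH⟩ := (exists_isBlockTriangular_map_eq_iff d H H').2 hd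
    exact ⟨g, ⟨d, hdG, hg⟩, hgH⟩

end Orbits

section SpecialIsometries

/-- The underlying set of the special isometry group of a bilinear form `β`: `SO(β)` for `β`
symmetric and `Sp(β)` for `β` skew-symmetric, if `β` is nondegenerate. Meant for modules with a
finite basis: otherwise `LinearMap.det` is constantly `1`. -/
def specialIsometries {R M : Type*} [CommRing R] [AddCommGroup M] [Module R M]
    (β : M →ₗ[R] M →ₗ[R] R) : Set (M ≃ₗ[R] M) :=
  {h | (∀ x y, β (h x) (h y) = β x y) ∧ LinearMap.det h.toLinearMap = 1}

lemma mem_specialIsometries {R M : Type*} [CommRing R] [AddCommGroup M] [Module R M]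
    {β : M →ₗ[R] M →ₗ[R] R} {h : M ≃ₗ[R] M} :
    h ∈ specialIsometries β ↔
      (∀ x y, β (h x) (h y) = β x y) ∧ LinearMap.det h.toLinearMap = 1 := Iff.rfl

variable {m : ℕ} {Bi : Fin m → Type*} [∀ i, AddCommGroup (Bi i)] [∀ i, Module ℂ (Bi i)]

lemma prI_eq_gradedPiece (i : Fin m) (H : Submodule ℂ (∀ j, Bi j)) :
    prI Bi i H = gradedPiece i H := rfl

lemma sub_single_mem_Blt_iff {i : Fin m} {w : ∀ j, Bi j} {y : Bi i} :
    w - Pi.single i y ∈ Blt Bi i ↔ w ∈ filtrationLE ℂ Bi i ∧ w i = y := by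
  have mem_Blt {v : ∀ j, Bi j} : v ∈ Blt Bi i ↔ ∀ j, i ≤ j → v j = 0 := by
    simp [Blt, Submodule.mem_pi]
  rw [mem_Blt, mem_filtrationLE]
  constructor
  · intro h
    exact ⟨fun j hj => by simpa [hj.ne'] using h j hj.le, by simpa [sub_eq_zero] using h i le_rfl⟩
  · rintro ⟨hw, rfl⟩ j hj
    rcases hj.eq_or_lt with rfl | hj
    · simp
    · simp [hw j hj, hj.ne']

lemma isBlockTriangular_iff_sub_single_mem_Blt {g : (∀ j, Bi j) →ₗ[ℂ] ∀ j, Bi j}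
    {d : ∀ i, Bi i →ₗ[ℂ] Bi i} :
    IsBlockTriangular g d ↔ ∀ i, ∀ v : ∀ j, Bi j, (∀ j, j ≠ i → v j = 0) →
      g v - Pi.single i (d i (v i)) ∈ Blt Bi i := by
  simp only [isBlockTriangular_iff_single, sub_single_mem_Blt_iff]
  refine forall_congr' fun i => ⟨fun hg v hv => ?_, fun hg x => ?_⟩
  · have single_eq : Pi.single i (v i) = v := funext fun j => by
      rcases eq_or_ne j i with rfl | hj
      · exact Pi.single_eq_same j _
      · rw [Pi.single_eq_of_ne hj, hv j hj]
    simpa only [single_eq] using hg (v i)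
  · simpa using hg (Pi.single i x) fun j hj => Pi.single_eq_of_ne hj x

lemma memQB_iff_exists_isBlockTriangular {βi : ∀ i, Bi i →ₗ[ℂ] Bi i →ₗ[ℂ] ℂ}
    {g : (∀ j, Bi j) →ₗ[ℂ] ∀ j, Bi j} :
    memQB Bi βi g ↔ ∃ d : ∀ i, Bi i ≃ₗ[ℂ] Bi i, (∀ i, d i ∈ specialIsometries (βi i)) ∧
      IsBlockTriangular g fun i => (d i).toLinearMap := by
  constructor
  · rintro ⟨-, hg⟩
    choose d hdβ hdet hd using hg
    exact ⟨d, fun i => ⟨hdβ i, hdet i⟩, isBlockTriangular_iff_sub_single_mem_Blt.2 hd⟩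
  · rintro ⟨d, hd, hg⟩
    exact ⟨⟨hg.injective fun i => (d i).injective, hg.surjective fun i => (d i).surjective⟩,
      fun i => ⟨d i, (hd i).1, (hd i).2, isBlockTriangular_iff_sub_single_mem_Blt.1 hg i⟩⟩

end SpecialIsometries

/-- Proposition 5.1(1) (`prop:filt-orbits`), orbit criterion: two subspaces `H, H'` of
`B = B₁ ⊕ ⋯ ⊕ B_m` lie in the same `Q_B`-orbit if and only if for each `i` some isometry of
`B_i` of determinant `1` carries `pr_i H` to `pr_i H'`. -/
theorem stmt_11 {m : ℕ} (Bi : Fin m → Type*)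
    [∀ i, AddCommGroup (Bi i)] [∀ i, Module ℂ (Bi i)]
    [∀ i, FiniteDimensional ℂ (Bi i)] [∀ i, Nontrivial (Bi i)]
    (βi : ∀ i, Bi i →ₗ[ℂ] Bi i →ₗ[ℂ] ℂ)
    (hnd : ∀ i, ∀ v, (∀ w, βi i v w = 0) → v = 0)
    (hrefl : ∀ i, (∀ v w, βi i v w = βi i w v) ∨ (∀ v w, βi i v w = - βi i w v))
    (H H' : Submodule ℂ (∀ j, Bi j)) :
    (∃ g : (∀ j, Bi j) →ₗ[ℂ] (∀ j, Bi j), memQB Bi βi g ∧ Submodule.map g H = H') ↔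
      (∀ i, ∃ h : Bi i ≃ₗ[ℂ] Bi i,
        (∀ x y, βi i (h x) (h y) = βi i x y) ∧
        LinearMap.det (h : Bi i →ₗ[ℂ] Bi i) = 1 ∧
        Submodule.map (h : Bi i →ₗ[ℂ] Bi i) (prI Bi i H) = prI Bi i H') := by
  simpa only [memQB_iff_exists_isBlockTriangular, prI_eq_gradedPiece, mem_specialIsometries,
    and_assoc] using stmt_11_general (fun i => specialIsometries (βi i)) H H'
end
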